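/- arXiv:1609.03694 — 6 statements merged into one kernel-verified Lean document; each statement's English description precedes it below -/
import Mathlib

section
/- Let n ≥ 2 be an integer and p an odd prime with p ≥ 2n−5. If a is an integer such that p divides a, or such that a is not a square modulo p, then Kl_{p^n}(a,1) = 0, i.e. Σ_{1 ≤ x ≤ p^n, p ∤ x} e((a x + x̄)/p^n) = 0. -/
open scoped BigOperators
open Filter MeasureTheory

noncomputable section

/-- `e(z) = exp(2πiz)`. -/
def eC (z : ℝ) : ℂ := Complex.exp (2 * Real.pi * Complex.I * z)

/-- The additive character `x ↦ e(x/q)` on `ZMod q`. -/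
def eMod (q : ℕ) (x : ZMod q) : ℂ := eC ((x.val : ℝ) / q)

/-- Partial normalized Kloosterman sum
`p^{-n/2} ∑_{1 ≤ x ≤ j, p ∤ x} e((a x + b x̄)/p^n)`. -/
def klPartial (p n : ℕ) (j : ℕ) (a b : ZMod (p ^ n)) : ℂ :=
  (Real.sqrt ((p : ℝ) ^ n))⁻¹ *
    ∑ x ∈ (Finset.Icc 1 j).filter (fun x => ¬ p ∣ x),
      eMod (p ^ n) (a * (x : ZMod (p ^ n)) + b * (x : ZMod (p ^ n))⁻¹)

/-- The complete normalized Kloosterman sum `Kl_{p^n}(a,b)`. -/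
def klFull (p n : ℕ) (a b : ZMod (p ^ n)) : ℂ := klPartial p n (p ^ n) a b

/-- The `i`-th element (1-indexed) of `J_p^n = {1 ≤ j ≤ p^n : p ∤ j}`. -/
def jIdx (p i : ℕ) : ℕ := i + (i - 1) / (p - 1)

/-- The parametrized Kloosterman path `t ↦ Kl_{p^n}(t;(a,b))`. -/
def klPath (p n : ℕ) (a b : ZMod (p ^ n)) (t : ℝ) : ℂ :=
  let m : ℕ := (p ^ n).totient - 1
  let i : ℕ := max 1 (Int.toNat ⌈(m : ℝ) * t⌉)
  klPartial p n (jIdx p i) a b +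
    ((((m : ℝ) * t - ((i : ℝ) - 1) : ℝ)) : ℂ) *
      (klPartial p n (jIdx p (i + 1)) a b - klPartial p n (jIdx p i) a b)

/-- `x_k(t) = φ(p^n) t + k - 1`, where `k = ⌈p^{n-1} t⌉` is determined by
`t ∈ ((k-1)/p^{n-1}, k/p^{n-1}]`. -/
def xkf (p n : ℕ) (t : ℝ) : ℝ :=
  ((p ^ n).totient : ℝ) * t + ((⌈(p : ℝ) ^ (n - 1) * t⌉ : ℤ) : ℝ) - 1

/-- The discrete Fourier coefficient `α_{p^n}(h;t) = p^{-n/2} ∑_{1 ≤ x ≤ x_k(t)} e(hx/p^n)`. -/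
def alphaF (p n : ℕ) (h : ℤ) (t : ℝ) : ℂ :=
  (Real.sqrt ((p : ℝ) ^ n))⁻¹ *
    ∑ x ∈ Finset.Icc 1 (⌊xkf p n t⌋.toNat), eC ((h : ℝ) * (x : ℝ) / (p : ℝ) ^ n)

/-- `β(h;t)`: `t` for `h = 0` and `(e(ht)-1)/(2πih)` otherwise. -/
def betaF (h : ℤ) (t : ℝ) : ℂ :=
  if h = 0 then (t : ℂ) else (eC ((h : ℝ) * t) - 1) / (2 * Real.pi * Complex.I * h)

/-- The completed step path `K̃l_{p^n}(t;(a,b))`. -/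
def klStep (p n : ℕ) (a b : ZMod (p ^ n)) (t : ℝ) : ℂ :=
  klPartial p n (⌊xkf p n t⌋.toNat) a b

/-- The measure `μ = (1/2)δ₀ + μ₁` where `dμ₁ = (2π√(4-x²))⁻¹ 1_{(-2,2)} dx`. -/
def muKl : Measure ℝ :=
  (1 / 2 : ENNReal) • Measure.dirac (0 : ℝ) +
    volume.withDensity (fun x =>
      ENNReal.ofReal
        (Set.indicator (Set.Ioo (-2 : ℝ) 2)
          (fun y => 1 / (2 * Real.pi * Real.sqrt (4 - y ^ 2))) x))

/-!
Let `d ^ 2 ∣ q` and `ε = q / d` in `ZMod q`, so that `ε ^ 2 = 0`. For every `t`, the change of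
variables `u ↦ (1 + t ε) u` multiplies the `u`-th term of the Kloosterman sum
`∑ e((a u + b u⁻¹) / q)` by `e(t ε (a u - b u⁻¹) / q)`. Averaging over `t` annihilates every term
for which `a u ^ 2 ≢ b` modulo `d`.
-/

section KloostermanSum

variable {R R' : Type*} [CommRing R] [Fintype R] [DecidableEq R] [CommRing R']

/-- The unnormalized Kloosterman sum `∑ ψ(a u + b u⁻¹)` over the units `u` of a finite commutative
ring, for an arbitrary additive character `ψ`. -/
def kloostermanSum (ψ : AddChar R R') (a b : R) : R' :=
  ∑ u : Rˣ, ψ (a * u + b * ↑u⁻¹)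

theorem kloostermanSum_eq_sum_mul_of_sq_eq_zero (ψ : AddChar R R') (a b : R) {ε : R}
    (hε : ε ^ 2 = 0) :
    kloostermanSum ψ a b =
      ∑ u : Rˣ, ψ (a * u + b * ↑u⁻¹) * ψ (ε * (a * u - b * ↑u⁻¹)) := by
  let w : Rˣ := Units.mkOfMulEqOne (1 + ε) (1 - ε) (by linear_combination -hε)
  have hw : (w : R) = 1 + ε := rfl
  have hw_inv : (↑w⁻¹ : R) = 1 - ε := rfl
  rw [kloostermanSum, ← Equiv.sum_comp (Equiv.mulLeft w)]
  refine Finset.sum_congr rfl fun u _ => ?_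
  rw [← AddChar.map_add_eq_mul, Equiv.coe_mulLeft, mul_inv, Units.val_mul, Units.val_mul, hw,
    hw_inv]
  congr 1
  ring

theorem kloostermanSum_eq_zero_of_sq_eq_zero [IsDomain R'] [CharZero R'] {ψ : AddChar R R'}
    (hψ : ψ.IsPrimitive) {a b ε : R} (hε : ε ^ 2 = 0)
    (hphase : ∀ u : Rˣ, ε * (a * u - b * ↑u⁻¹) ≠ 0) : kloostermanSum ψ a b = 0 := by
  have hcard : (Fintype.card R : R') * kloostermanSum ψ a b = 0 := calc
    _ = ∑ _t : R, kloostermanSum ψ a b := by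
      rw [Finset.sum_const, Finset.card_univ, nsmul_eq_mul]
    _ = ∑ t : R, ∑ u : Rˣ, ψ (a * u + b * ↑u⁻¹) * ψ (t * (ε * (a * u - b * ↑u⁻¹))) :=
      Finset.sum_congr rfl fun t _ => by
        simp_rw [← mul_assoc t]
        exact kloostermanSum_eq_sum_mul_of_sq_eq_zero ψ a b (by rw [mul_pow, hε, mul_zero])
    _ = ∑ u : Rˣ, ψ (a * u + b * ↑u⁻¹) * ∑ t : R, ψ (t * (ε * (a * u - b * ↑u⁻¹))) := by
      rw [Finset.sum_comm]
      simp_rw [Finset.mul_sum]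
    _ = 0 := Finset.sum_eq_zero fun u _ => by
      rw [AddChar.sum_mulShift _ hψ, if_neg (hphase u), Nat.cast_zero, mul_zero]
  exact (mul_eq_zero.1 hcard).resolve_left (Nat.cast_ne_zero.2 Fintype.card_ne_zero)

end KloostermanSum

section ZMod

variable {q d : ℕ} [NeZero q]

theorem natCast_div_mul_eq_zero_iff (hd : d ∣ q) (x : ZMod q) :
    ((q / d : ℕ) : ZMod q) * x = 0 ↔ ZMod.castHom hd (ZMod d) x = 0 := by
  obtain ⟨m, rfl⟩ := ZMod.natCast_zmod_surjective x
  have hpos : 0 < q / d := Nat.div_pos (Nat.le_of_dvd (NeZero.pos q) hd)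
    (Nat.pos_of_dvd_of_pos hd (NeZero.pos q))
  rw [← Nat.cast_mul, map_natCast, ZMod.natCast_eq_zero_iff, ZMod.natCast_eq_zero_iff]
  nth_rw 1 [← Nat.div_mul_cancel hd]
  exact Nat.mul_dvd_mul_iff_left hpos

theorem natCast_div_sq_eq_zero (hd : d ^ 2 ∣ q) : ((q / d : ℕ) : ZMod q) ^ 2 = 0 := by
  have hdq : d ∣ q := (dvd_pow_self d two_ne_zero).trans hd
  rw [sq, natCast_div_mul_eq_zero_iff hdq, map_natCast, ZMod.natCast_eq_zero_iff]
  exact Nat.dvd_div_of_mul_dvd (sq d ▸ hd)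

theorem kloostermanSum_stdAddChar_eq_zero (hd : d ^ 2 ∣ q) {a b : ℤ}
    (hab : ∀ y : (ZMod d)ˣ, (a : ZMod d) * y ^ 2 ≠ b) :
    kloostermanSum (ZMod.stdAddChar (N := q)) a b = 0 := by
  have hdq : d ∣ q := (dvd_pow_self d two_ne_zero).trans hd
  refine kloostermanSum_eq_zero_of_sq_eq_zero (ZMod.isPrimitive_stdAddChar q)
    (natCast_div_sq_eq_zero hd) fun u hu => ?_
  set y : (ZMod d)ˣ := Units.map (ZMod.castHom hdq (ZMod d)) u
  have hy : (a : ZMod d) * y - b * ↑y⁻¹ = 0 := by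
    have hred := (natCast_div_mul_eq_zero_iff hdq _).1 hu
    rwa [map_sub, map_mul, map_mul, map_intCast, map_intCast] at hred
  exact hab y (by linear_combination (y : ZMod d) * hy + (b : ZMod d) * y.mul_inv)

theorem eMod_eq_stdAddChar (x : ZMod q) : eMod q x = ZMod.stdAddChar x := by
  rw [ZMod.stdAddChar_apply, ZMod.toCircle_apply, eMod, eC]
  congr 1
  push_cast
  ring

theorem sum_Icc_filter_coprime_eq_sum_units {M : Type*} [AddCommMonoid M] (f : ZMod q → M) :
    ∑ x ∈ (Finset.Icc 1 q).filter (fun x => q.Coprime x), f x = ∑ u : (ZMod q)ˣ, f u := by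
  refine Finset.sum_bij
    (fun x hx => ZMod.unitOfCoprime x (Finset.mem_filter.1 hx).2.symm) ?_ ?_ ?_ ?_
  · exact fun _ _ => Finset.mem_univ _
  · intro x hx y hy hxy
    have hmod : x ≡ y [MOD q] := (ZMod.natCast_eq_natCast_iff x y q).1 (congrArg Units.val hxy)
    rw [Finset.mem_filter, Finset.mem_Icc] at hx hy
    exact hmod.eq_of_abs_lt (by rw [abs_lt]; lia)
  · intro u _
    have hlt : (-(u : ZMod q)).val < q := ZMod.val_lt _
    -- Unlike `u.val`, this representative lies in `[1, q]` even for `q = 1`.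
    have hcast : ((q - (-(u : ZMod q)).val : ℕ) : ZMod q) = u := by
      rw [Nat.cast_sub hlt.le, ZMod.natCast_self, ZMod.natCast_zmod_val, zero_sub, neg_neg]
    have hcop : (q - (-(u : ZMod q)).val).Coprime q :=
      (ZMod.isUnit_iff_coprime _ q).1 (by rw [hcast]; exact u.isUnit)
    refine ⟨q - (-(u : ZMod q)).val, ?_, Units.ext hcast⟩
    rw [Finset.mem_filter, Finset.mem_Icc]
    exact ⟨by lia, hcop.symm⟩
  · exact fun _ _ => rfl

theorem kloosterman_vanishes_general (hd : d ^ 2 ∣ q) {a b : ℤ}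
    (hab : ∀ y : (ZMod d)ˣ, (a : ZMod d) * y ^ 2 ≠ b) :
    ∑ x ∈ (Finset.Icc 1 q).filter (fun x => q.Coprime x),
        eMod q ((a : ZMod q) * (x : ZMod q) + b * (x : ZMod q)⁻¹) = 0 := by
  rw [sum_Icc_filter_coprime_eq_sum_units (fun x : ZMod q => eMod q (a * x + b * x⁻¹))]
  simp_rw [eMod_eq_stdAddChar, ZMod.inv_coe_unit]
  exact kloostermanSum_stdAddChar_eq_zero hd hab

end ZMod

theorem mul_sq_ne_one {R : Type*} [CommRing R] [Nontrivial R] {c : R}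
    (hc : c = 0 ∨ ¬ ∃ y : R, y ^ 2 = c) (y : R) : c * y ^ 2 ≠ 1 := by
  intro h
  rcases hc with rfl | hnonsquare
  · exact zero_ne_one ((zero_mul _).symm.trans h)
  · exact hnonsquare ⟨c * y, by linear_combination c * h⟩

/-- Let `n ≥ 2` and let `p` be an odd prime with `p ≥ 2n - 5`.
If `p ∣ a`, or `a` is not a square modulo `p`, then the Kloosterman sum
`∑_{1 ≤ x ≤ p^n, p ∤ x} e((ax + x̄)/p^n)` vanishes. -/
theorem kloosterman_vanishes (n : ℕ) (hn : 2 ≤ n) (p : ℕ) (hp : p.Prime) (hodd : Odd p)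
    (hsize : 2 * n - 5 ≤ p) (a : ℤ)
    (ha : (p : ℤ) ∣ a ∨ ¬ ∃ y : ZMod p, y ^ 2 = (a : ZMod p)) :
    ∑ x ∈ (Finset.Icc 1 (p ^ n)).filter (fun x => ¬ p ∣ x),
        eMod (p ^ n) ((a : ZMod (p ^ n)) * (x : ZMod (p ^ n)) + ((x : ZMod (p ^ n)))⁻¹) = 0 := by
  have : Fact p.Prime := ⟨hp⟩
  have hab (y : (ZMod p)ˣ) : (a : ZMod p) * y ^ 2 ≠ (1 : ℤ) :=
    (mul_sq_ne_one (ha.imp_left (ZMod.intCast_zmod_eq_zero_iff_dvd a p).2) _).trans_eq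
      Int.cast_one.symm
  simpa only [Nat.coprime_pow_left_iff (zero_lt_two.trans_le hn), hp.coprime_iff_not_dvd,
    Int.cast_one, one_mul] using kloosterman_vanishes_general (pow_dvd_pow p hn) hab

end
end

section
/- Let p be an odd prime, n ≥ 2 an integer, and T a nonempty finite subset of ℤ/p^nℤ whose elements have pairwise distinct reductions modulo p; set K := |T|. Let (ℓ_τ)_{τ∈T} be integers with |ℓ_τ| < p for all τ and ℓ_τ ≠ 0 for at least one τ. Then for every residue w modulo p, the number of tuples b = (b_τ)_{τ∈T} of integers in {1, …, (p−1)/2} satisfying: (i) b_τ² − τ ≡ b_{τ'}² − τ' (mod p) for all τ, τ' ∈ T; (ii) p ∤ (b_τ² − τ) for all τ ∈ T; (iii) Σ_{τ∈T} ℓ_τ·b_τ^{−1} ≡ w (mod p); and (iv) Σ_{τ∈T} ℓ_τ·b_τ^{−(2j−1)} ≡ 0 (mod p) for every j ∈ {2, …, n−1} (inverses taken modulo p), is at most K·2^{K−1}. -/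
open scoped BigOperators
open Filter MeasureTheory

noncomputable section

/-!
Put `x = b τ ^ 2 - τ`, which does not depend on `τ`: each `b τ` is a square root of `x + τ`, and is
determined by it because squaring is injective on `{1, …, (p - 1) / 2}`. So it suffices to bound the
number of `x`. Let `s τ` be the square root of `X + τ`. The element `∑ τ, l τ / s τ - w` acts by
multiplication on the span of the `2 ^ K` products `∏ τ ∈ A, s τ`; multiplying the row of `A` by
`∏ τ ∉ A, (X + τ)` makes the matrix of this action polynomial, and its determinant has degree at
most `∑ A, (K - |A|) = K * 2 ^ (K - 1)`. Every admissible `x` is a root of the determinant, the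
vector of products of the `b τ` being in the kernel. The determinant is not the zero polynomial: if
`l k ≠ 0`, then at `X = -k` only `s k` vanishes and the matrix becomes injective.
-/

section SqrtMatrix

open Finset Polynomial
open scoped Matrix symmDiff

lemma natDegree_det_le_sum {R n : Type*} [CommRing R] [Fintype n] [DecidableEq n]
    (M : Matrix n n R[X]) (d : n → ℕ) (h : ∀ i j, (M i j).natDegree ≤ d i) :
    M.det.natDegree ≤ ∑ i, d i := by
  rw [← Matrix.det_transpose, Matrix.det_apply]
  refine natDegree_sum_le_of_forall_le _ _ fun σ _ => ?_
  calc _ ≤ (∏ i, Mᵀ (σ i) i).natDegree := natDegree_smul_le _ _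
    _ ≤ ∑ i, (M i (σ i)).natDegree := natDegree_prod_le _ _
    _ ≤ ∑ i, d i := sum_le_sum fun i _ => h i (σ i)

lemma natDegree_C_mul_prod_X_add_C_le {R ι : Type*} [CommSemiring R] (a : R) (t : ι → R)
    (A : Finset ι) : (C a * ∏ j ∈ A, (X + C (t j))).natDegree ≤ #A := by
  nontriviality R
  refine (natDegree_C_mul_le _ _).trans ((natDegree_prod_le _ _).trans ?_)
  simp

lemma sum_card_compl (ι : Type*) [Fintype ι] [DecidableEq ι] :
    ∑ A : Finset ι, #Aᶜ = Fintype.card ι * 2 ^ (Fintype.card ι - 1) := by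
  calc ∑ A : Finset ι, #Aᶜ = ∑ A : Finset ι, #A := Equiv.sum_comp compl_involutive.toPerm card
    _ = ∑ m ∈ range (Fintype.card ι + 1), m * (Fintype.card ι).choose m := by
      simpa [mul_comm] using sum_powerset_apply_card (id : ℕ → ℕ) (x := (univ : Finset ι))
    _ = _ := Nat.sum_range_mul_choose _

variable {R F ι : Type*} [CommRing R] [Field F] [Fintype ι] [DecidableEq ι]

/-- The matrix of multiplication by `∑ i, l i * (s i)⁻¹ - w`, where `s i` is a formal square root of
`y i`, on the products `∏ i ∈ A, s i`. The row of `A` is multiplied by `∏ i ∈ Aᶜ, y i` to avoid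
denominators: `(s i)⁻¹` takes the product over `A` to the product over `A ∆ {i}`, divided by `y i`
when `i ∉ A`. -/
def sqrtMatrix (y l : ι → R) (w : R) : Matrix (Finset ι) (Finset ι) R := fun A B =>
  (∑ i, if B = A ∆ {i} then l i * ∏ j ∈ Aᶜ.erase i, y j else 0)
    - if B = A then w * ∏ j ∈ Aᶜ, y j else 0

lemma sqrtMatrix_mulVec (y l : ι → R) (w : R) (v : Finset ι → R) (A : Finset ι) :
    (sqrtMatrix y l w *ᵥ v) A =
      ∑ i, l i * (∏ j ∈ Aᶜ.erase i, y j) * v (A ∆ {i}) - w * (∏ j ∈ Aᶜ, y j) * v A := by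
  simp only [Matrix.mulVec, dotProduct, sqrtMatrix, sub_mul, sum_sub_distrib, sum_mul]
  rw [sum_comm]
  simp [ite_mul]

lemma map_det_sqrtMatrix {S : Type*} [CommRing S] (f : R →+* S) (y l : ι → R) (w : R) :
    f (sqrtMatrix y l w).det = (sqrtMatrix (f ∘ y) (f ∘ l) (f w)).det := by
  rw [RingHom.map_det]
  congr 1
  ext A B
  simp [sqrtMatrix, apply_ite f]

lemma prod_compl_erase_sq_mul_prod_symmDiff (s : ι → F) {i : ι} (hi : s i ≠ 0) (A : Finset ι) :
    (∏ j ∈ Aᶜ.erase i, s j ^ 2) * ∏ j ∈ A ∆ {i}, s j =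
      (s i)⁻¹ * ((∏ j ∈ Aᶜ, s j ^ 2) * ∏ j ∈ A, s j) := by
  by_cases hA : i ∈ A
  · have h_erase : A ∆ {i} = A.erase i := by grind [mem_symmDiff]
    rw [h_erase, erase_eq_of_notMem (by simpa using hA), ← mul_prod_erase A s hA]
    field_simp
  · have h_insert : A ∆ {i} = insert i A := by grind [mem_symmDiff]
    rw [h_insert, prod_insert hA, ← mul_prod_erase Aᶜ (s · ^ 2) (mem_compl.2 hA)]
    field_simp

lemma det_sqrtMatrix_sq_eq_zero {s : ι → F} (hs : ∀ i, s i ≠ 0) (l : ι → F) :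
    (sqrtMatrix (s ^ 2) l (∑ i, l i * (s i)⁻¹)).det = 0 := by
  refine Matrix.exists_mulVec_eq_zero_iff.1 ⟨fun A => ∏ j ∈ A, s j, fun h => ?_, ?_⟩
  · simpa using congrFun h ∅
  · ext A
    simp only [sqrtMatrix_mulVec, Pi.pow_apply, Pi.zero_apply, mul_assoc,
      prod_compl_erase_sq_mul_prod_symmDiff s (hs _), sum_mul, sub_self]

lemma sqrtMatrix_mulVec_of_eq_zero {y l : ι → R} {w : R} {v : Finset ι → R} {k : ι} {A : Finset ι}
    (hk : y k = 0) (hv : k ∈ A → ∀ B, k ∈ B → v B = 0) :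
    (sqrtMatrix y l w *ᵥ v) A = l k * (∏ j ∈ Aᶜ.erase k, y j) * v (A ∆ {k}) := by
  have h_diag : (∏ j ∈ Aᶜ, y j) * v A = 0 := by
    by_cases hA : k ∈ A
    · rw [hv hA A hA, mul_zero]
    · rw [prod_eq_zero (mem_compl.2 hA) hk, zero_mul]
  have h_off : ∀ i ≠ k, (∏ j ∈ Aᶜ.erase i, y j) * v (A ∆ {i}) = 0 := by
    intro i hi
    by_cases hA : k ∈ A
    · rw [hv hA (A ∆ {i}) (by simp [mem_symmDiff, hA, hi.symm]), mul_zero]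
    · rw [prod_eq_zero (mem_erase.2 ⟨hi.symm, mem_compl.2 hA⟩) hk, zero_mul]
  rw [sqrtMatrix_mulVec, mul_assoc w, h_diag, mul_zero, sub_zero]
  exact sum_eq_single k (fun i _ hi => by rw [mul_assoc, h_off i hi, mul_zero]) (by simp)

lemma det_sqrtMatrix_ne_zero [IsDomain R] {y l : ι → R} {k : ι} (hk : y k = 0)
    (hy : ∀ i ≠ k, y i ≠ 0) (hl : l k ≠ 0) (w : R) : (sqrtMatrix y l w).det ≠ 0 := by
  intro hdet
  obtain ⟨v, hv, hMv⟩ := Matrix.exists_mulVec_eq_zero_iff.2 hdet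
  have hker (A : Finset ι) (hA : k ∈ A → ∀ B, k ∈ B → v B = 0) : v (A ∆ {k}) = 0 := by
    have hprod : ∏ j ∈ Aᶜ.erase k, y j ≠ 0 :=
      prod_ne_zero_iff.2 fun j hj => hy j (ne_of_mem_erase hj)
    have hrow := (sqrtMatrix_mulVec_of_eq_zero hk hA).symm.trans (congrFun hMv A)
    exact (mul_eq_zero.1 hrow).resolve_left (mul_ne_zero hl hprod)
  have hmem (B : Finset ι) (hB : k ∈ B) : v B = 0 := by
    simpa using hker (B ∆ {k}) (by simp [mem_symmDiff, hB])
  exact hv (funext fun A => by simpa using hker (A ∆ {k}) fun _ => hmem)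

/-- The polynomial in `X` that eliminates the square roots `s i` from the equations
`s i ^ 2 = X + t i` and `∑ i, l i * (s i)⁻¹ = w`. -/
def sqrtEliminant (t l : ι → R) (w : R) : R[X] :=
  (sqrtMatrix (fun i => X + C (t i)) (fun i => C (l i)) (C w)).det

lemma natDegree_sqrtEliminant_le (t l : ι → R) (w : R) :
    (sqrtEliminant t l w).natDegree ≤ Fintype.card ι * 2 ^ (Fintype.card ι - 1) := by
  rw [← sum_card_compl]
  refine natDegree_det_le_sum _ _ fun A B => (natDegree_sub_le _ _).trans (max_le ?_ ?_)
  · refine natDegree_sum_le_of_forall_le _ _ fun i _ => ?_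
    split_ifs
    · exact (natDegree_C_mul_prod_X_add_C_le _ _ _).trans (card_le_card (erase_subset _ _))
    · simp
  · split_ifs
    · exact natDegree_C_mul_prod_X_add_C_le _ _ _
    · simp

lemma eval_sqrtEliminant (t l : ι → R) (w x : R) :
    (sqrtEliminant t l w).eval x = (sqrtMatrix (fun i => x + t i) l w).det := by
  rw [sqrtEliminant, ← coe_evalRingHom, map_det_sqrtMatrix]
  simp [Function.comp_def]

lemma sqrtEliminant_ne_zero [IsDomain R] {t l : ι → R} (ht : Function.Injective t)
    (hl : ∃ k, l k ≠ 0) (w : R) : sqrtEliminant t l w ≠ 0 := by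
  obtain ⟨k, hk⟩ := hl
  intro h
  have hdet : (sqrtMatrix (fun i => -t k + t i) l w).det = 0 := by
    rw [← eval_sqrtEliminant, h, eval_zero]
  refine det_sqrtMatrix_ne_zero (neg_add_cancel _) (fun i hi h0 => hi (ht ?_)) hk w hdet
  exact (neg_add_eq_zero.1 h0).symm

lemma isRoot_sqrtEliminant {t l s : ι → F} {w x : F} (hs : ∀ i, s i ≠ 0)
    (hsq : ∀ i, s i ^ 2 = x + t i) (hw : ∑ i, l i * (s i)⁻¹ = w) :
    (sqrtEliminant t l w).IsRoot x := by
  have hy : (fun i => x + t i) = s ^ 2 := funext fun i => (hsq i).symm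
  rw [IsRoot, eval_sqrtEliminant, hy, ← hw, det_sqrtMatrix_sq_eq_zero hs]

end SqrtMatrix

theorem encard_exists_sqrt_sum_inv_eq_le {F ι : Type*} [Field F] [Fintype ι]
    {t l : ι → F} (ht : Function.Injective t) (hl : ∃ k, l k ≠ 0) (w : F) :
    {x : F | ∃ s : ι → F, (∀ i, s i ≠ 0) ∧ (∀ i, s i ^ 2 = x + t i) ∧
      ∑ i, l i * (s i)⁻¹ = w}.encard ≤ (Fintype.card ι * 2 ^ (Fintype.card ι - 1) : ℕ) := by
  classical
  set P := sqrtEliminant t l w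
  have hP : P ≠ 0 := sqrtEliminant_ne_zero ht hl w
  have hcard : P.roots.toFinset.card ≤ Fintype.card ι * 2 ^ (Fintype.card ι - 1) :=
    (Multiset.toFinset_card_le _).trans <| P.card_roots'.trans <| natDegree_sqrtEliminant_le t l w
  refine (Set.encard_le_encard (t := ↑P.roots.toFinset) ?_).trans ?_
  · rintro x ⟨s, hs, hsq, hw⟩
    simpa [hP] using isRoot_sqrtEliminant hs hsq hw
  · rw [Set.encard_coe_eq_coe_finsetCard]
    exact_mod_cast hcard

lemma eq_of_natCast_sq_eq {F : Type*} [CommRing F] [IsDomain F] {N : ℕ}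
    (hN : ∀ m, 1 ≤ m → m ≤ 2 * N → (m : F) ≠ 0) {a b : ℕ} (ha : 1 ≤ a ∧ a ≤ N)
    (hb : 1 ≤ b ∧ b ≤ N) (hsq : (a : F) ^ 2 = (b : F) ^ 2) : a = b := by
  rcases sq_eq_sq_iff_eq_or_eq_neg.1 hsq with h | h
  · by_contra hab
    wlog hlt : b < a generalizing a b
    · exact this hb ha hsq.symm h.symm (Ne.symm hab) (by omega)
    exact hN (a - b) (by omega) (by omega) (by rw [Nat.cast_sub hlt.le, h, sub_self])
  · exact absurd (by rw [Nat.cast_add, h, neg_add_cancel]) (hN (a + b) (by omega) (by omega))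

lemma natCast_zmod_ne_zero_of_lt {p m : ℕ} (hm : 0 < m) (hlt : m < p) : (m : ZMod p) ≠ 0 := by
  rw [Ne, ZMod.natCast_eq_zero_iff]
  exact Nat.not_dvd_of_pos_of_lt hm hlt

lemma intCast_zmod_ne_zero_of_abs_lt {p : ℕ} {a : ℤ} (ha : a ≠ 0) (hlt : |a| < p) :
    (a : ZMod p) ≠ 0 := fun h =>
  ha (Int.eq_zero_of_abs_lt_dvd ((ZMod.intCast_zmod_eq_zero_iff_dvd _ _).1 h) hlt)

theorem counting_argument_general {F α : Type*} [Field F] {N : ℕ}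
    (hN : ∀ m, 1 ≤ m → m ≤ 2 * N → (m : F) ≠ 0) {T : Finset α} {t l : α → F}
    (ht : Set.InjOn t T) (hl : ∃ τ ∈ T, l τ ≠ 0) (w : F) :
    {b : α → ℕ |
        (∀ τ ∈ T, 1 ≤ b τ ∧ b τ ≤ N) ∧ (∀ τ ∉ T, b τ = 1) ∧
        (∀ τ ∈ T, ∀ τ' ∈ T, (b τ : F) ^ 2 - t τ = (b τ' : F) ^ 2 - t τ') ∧
        ∑ τ ∈ T, l τ * (b τ : F)⁻¹ = w}.encard
      ≤ (T.card * 2 ^ (T.card - 1) : ℕ) := by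
  obtain ⟨τ₀, hτ₀, hl₀⟩ := hl
  have hshifts :=
    encard_exists_sqrt_sum_inv_eq_le (l := fun τ : T => l τ) ht.injective ⟨⟨τ₀, hτ₀⟩, hl₀⟩ w
  rw [Fintype.card_coe] at hshifts
  refine (Set.encard_le_encard_of_injOn (f := fun b => (b τ₀ : F) ^ 2 - t τ₀) ?_ ?_).trans hshifts
  · rintro b ⟨hb, -, hconst, hw⟩
    refine ⟨fun τ => b τ, fun τ => ?_, fun τ => ?_, ?_⟩
    · exact hN _ (hb τ τ.2).1 (by have := (hb τ τ.2).2; omega)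
    · exact sub_eq_iff_eq_add.1 (hconst τ τ.2 τ₀ hτ₀)
    · rw [← hw]
      exact T.sum_coe_sort fun τ => l τ * (b τ : F)⁻¹
  · rintro b ⟨hb, hb_off, hb_const, -⟩ c ⟨hc, hc_off, hc_const, -⟩ hbc
    funext τ
    by_cases hτ : τ ∈ T
    · refine eq_of_natCast_sq_eq hN (hb τ hτ) (hc τ hτ) ?_
      linear_combination hbc + hb_const τ hτ τ₀ hτ₀ - hc_const τ hτ τ₀ hτ₀
    · rw [hb_off τ hτ, hc_off τ hτ]

/-- The counting argument: the number of tuples `(b_τ)_{τ ∈ T}` with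
entries in `{1, …, (p-1)/2}` satisfying conditions (i)–(iv) is at most `K·2^{K-1}`,
`K = |T|`. Tuples are encoded as functions `ZMod (p^n) → ℕ` equal to `1` off `T`. -/
theorem counting_argument (p n : ℕ) (hp : p.Prime) (hodd : Odd p) (hn : 2 ≤ n)
    (T : Finset (ZMod (p ^ n))) (hT : T.Nonempty)
    (hdist : Set.InjOn (fun τ : ZMod (p ^ n) => ((ZMod.val τ : ZMod p))) (T : Set (ZMod (p ^ n))))
    (l : ZMod (p ^ n) → ℤ) (hlbd : ∀ τ ∈ T, |l τ| < (p : ℤ))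
    (hlne : ∃ τ ∈ T, l τ ≠ 0) (w : ZMod p) :
    ({b : ZMod (p ^ n) → ℕ |
        (∀ τ ∈ T, 1 ≤ b τ ∧ b τ ≤ (p - 1) / 2) ∧ (∀ τ ∉ T, b τ = 1) ∧
        (∀ τ ∈ T, ∀ τ' ∈ T,
          ((b τ : ZMod p)) ^ 2 - (ZMod.val τ : ZMod p)
            = ((b τ' : ZMod p)) ^ 2 - (ZMod.val τ' : ZMod p)) ∧
        (∀ τ ∈ T, ((b τ : ZMod p)) ^ 2 - (ZMod.val τ : ZMod p) ≠ 0) ∧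
        (∑ τ ∈ T, (l τ : ZMod p) * ((b τ : ZMod p))⁻¹ = w) ∧
        (∀ j : ℕ, 2 ≤ j → j ≤ n - 1 →
          ∑ τ ∈ T, (l τ : ZMod p) * (((b τ : ZMod p))⁻¹) ^ (2 * j - 1) = 0)} : Set _).Finite ∧
    ({b : ZMod (p ^ n) → ℕ |
        (∀ τ ∈ T, 1 ≤ b τ ∧ b τ ≤ (p - 1) / 2) ∧ (∀ τ ∉ T, b τ = 1) ∧
        (∀ τ ∈ T, ∀ τ' ∈ T,
          ((b τ : ZMod p)) ^ 2 - (ZMod.val τ : ZMod p)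
            = ((b τ' : ZMod p)) ^ 2 - (ZMod.val τ' : ZMod p)) ∧
        (∀ τ ∈ T, ((b τ : ZMod p)) ^ 2 - (ZMod.val τ : ZMod p) ≠ 0) ∧
        (∑ τ ∈ T, (l τ : ZMod p) * ((b τ : ZMod p))⁻¹ = w) ∧
        (∀ j : ℕ, 2 ≤ j → j ≤ n - 1 →
          ∑ τ ∈ T, (l τ : ZMod p) * (((b τ : ZMod p))⁻¹) ^ (2 * j - 1) = 0)} : Set _).ncard
      ≤ T.card * 2 ^ (T.card - 1) := by
  have := Fact.mk hp
  have hhalf (m : ℕ) (hm : 1 ≤ m) (hle : m ≤ 2 * ((p - 1) / 2)) : (m : ZMod p) ≠ 0 :=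
    natCast_zmod_ne_zero_of_lt hm (by omega)
  have hl : ∃ τ ∈ T, (l τ : ZMod p) ≠ 0 :=
    hlne.imp fun τ ⟨hτ, hne⟩ => ⟨hτ, intCast_zmod_ne_zero_of_abs_lt hne (hlbd τ hτ)⟩
  refine Set.encard_le_coe_iff_finite_ncard_le.1 <|
    (Set.encard_le_encard ?_).trans (counting_argument_general hhalf hdist hl w)
  exact fun b ⟨hrange, hoff, hconst, _, hw, _⟩ => ⟨hrange, hoff, hconst, hw⟩

end
end

section
/- There is an absolute constant C > 0 such that the following holds. Let p be an odd prime, n ≥ 1 an integer, and T a finite subset of ℤ/p^nℤ; let k be the number of distinct reductions modulo p of the elements of T. Let A := {a ∈ (ℤ/p^nℤ)^× : for every τ ∈ T, a + τ is the square of a unit of ℤ/p^nℤ}. Then | |A| − φ(p^n)/2^k | ≤ C·k·φ(p^n)/p^{1/2}. -/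
open scoped BigOperators
open Filter MeasureTheory

noncomputable section

/-!
Over a finite field `F` of odd order `q`, the indicator of `x + t` being a nonzero square is
`(1 + χ(x + t)) / 2` with `χ` the quadratic character, up to the `x` with `x + t = 0`. Expanding
the product over the `k` shifts `t` leaves the main term `(q - 1) / 2 ^ k` and complete sums of
`χ ∘ f` with `f` squarefree of positive degree, each of size `O(deg f * √q)`.

The bound on these sums is Stepanov's method. The solutions of `f(x) ^ ((q - 1) / 2) = a` are zeros
of order `l` of `f ^ l * ∑ j < J, (r j + s j * f ^ ((q - 1) / 2)) * X ^ (q * j)` as soon as the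
coefficients of `r j` and `s j`, of degree `< D`, satisfy a linear system; there are more unknowns
than equations, and the result is nonzero because `f` is not a constant times a square. Taking
`l ≈ √q`, `J ≈ l / 2` and `D ≈ q / 2` and comparing `l` times the number of solutions with the
degree gives at most `q / 2 + O(deg f * √q)` solutions.

For a finite local ring `R` mapping onto `F`, squaring is bijective on the kernel of `Rˣ → Fˣ`: if
`u ^ 2 = 1` and `u ↦ 1`, then `u + 1 ↦ 2` is a unit and kills `u - 1`. So a unit of `R` is a square
exactly when its image in `F` is, and the count over `R` is a multiple of the one over `F`.
-/

section HasseDerivative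

open Polynomial

theorem pow_sub_dvd_hasseDeriv_pow_mul {R : Type*} [CommSemiring R] (f P : R[X]) (e k : ℕ) :
    f ^ (e - k) ∣ hasseDeriv k (f ^ e * P) := by
  induction e generalizing k with
  | zero => simp
  | succ e ih =>
    rw [pow_succ', mul_assoc, hasseDeriv_mul]
    refine Finset.dvd_sum ?_
    rintro ⟨i, j⟩ hij
    have hij := Finset.HasAntidiagonal.mem_antidiagonal.1 hij
    dsimp only at hij ⊢
    rcases Nat.eq_zero_or_pos i with rfl | hi
    · refine (pow_dvd_pow f (by omega : e + 1 - k ≤ e - j + 1)).trans ?_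
      rw [hasseDeriv_zero', pow_succ']
      exact mul_dvd_mul_left f (ih j)
    · exact (pow_dvd_pow f (by omega : e + 1 - k ≤ e - j)).trans ((ih j).mul_left _)

theorem exists_linearMap_hasseDeriv_pow_mul {R : Type*} [CommRing R] [IsDomain R] {f : R[X]}
    (hf : f ≠ 0) (e k : ℕ) :
    ∃ L : R[X] →ₗ[R] R[X], ∀ P, hasseDeriv k (f ^ e * P) = f ^ (e - k) * L P := by
  choose Q hQ using fun P => pow_sub_dvd_hasseDeriv_pow_mul f P e k
  have hcancel {A B : R[X]} (h : f ^ (e - k) * A = f ^ (e - k) * B) : A = B :=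
    mul_left_cancel₀ (pow_ne_zero _ hf) h
  refine ⟨{ toFun := Q
            map_add' := fun P P' => hcancel ?_
            map_smul' := fun c P => hcancel ?_ }, hQ⟩
  · rw [mul_add, ← hQ, ← hQ, ← hQ, mul_add, map_add]
  · rw [RingHom.id_apply, mul_smul_comm, ← hQ, ← hQ, mul_smul_comm, map_smul]

theorem natDegree_le_of_hasseDeriv_pow_mul_eq {R : Type*} [CommRing R] [IsDomain R]
    {f P Q : R[X]} (hf : f ≠ 0) {e k : ℕ} (hk : k ≤ e)
    (h : hasseDeriv k (f ^ e * P) = f ^ (e - k) * Q) :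
    Q.natDegree ≤ P.natDegree + k * f.natDegree := by
  rcases eq_or_ne Q 0 with rfl | hQ
  · simp
  have hdeg : (e - k) * f.natDegree + Q.natDegree ≤ e * f.natDegree + P.natDegree := by
    rw [← natDegree_pow, ← natDegree_mul (pow_ne_zero _ hf) hQ, ← h, ← natDegree_pow]
    exact (natDegree_hasseDeriv_le _ _).trans ((Nat.sub_le _ _).trans natDegree_mul_le)
  have hsplit : e * f.natDegree = (e - k) * f.natDegree + k * f.natDegree := by
    rw [← add_mul, Nat.sub_add_cancel hk]
  omega

theorem X_sub_C_pow_dvd_of_eval_hasseDeriv_eq_zero {R : Type*} [CommRing R] {P : R[X]} {x : R}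
    {l : ℕ} (h : ∀ k < l, (hasseDeriv k P).eval x = 0) : (X - C x) ^ l ∣ P := by
  rw [X_sub_C_pow_dvd_iff, X_pow_dvd_iff, ← taylor_apply]
  intro k hk
  rw [taylor_coeff, h k hk]

theorem mul_card_le_natDegree_of_X_sub_C_pow_dvd {F : Type*} [Field F] {P : F[X]} (hP : P ≠ 0)
    {S : Finset F} {l : ℕ} (h : ∀ x ∈ S, (X - C x) ^ l ∣ P) : l * S.card ≤ P.natDegree := by
  have hdvd : ∏ x ∈ S, (X - C x) ^ l ∣ P :=
    Finset.prod_dvd_of_coprime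
      (fun x _ y _ hxy => (pairwise_coprime_X_sub_C Function.injective_id hxy).pow) h
  have hdeg : (∏ x ∈ S, (X - C x) ^ l).natDegree = l * S.card := by
    rw [Finset.prod_pow, natDegree_pow, natDegree_finsetProd_X_sub_C_eq_card]
  exact hdeg ▸ natDegree_le_of_dvd hdvd hP

end HasseDerivative

section AuxiliaryPolynomial

open Polynomial

variable {F : Type*} [Field F]

theorem exists_ne_zero_forall_eq_zero_of_degree_lt {V ι : Type*} [AddCommGroup V] [Module F V]
    [Module.Finite F V] [Fintype ι] (Λ : ι → V →ₗ[F] F[X]) {M : ℕ}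
    (hΛ : ∀ i v, (Λ i v).degree < M) (h : Fintype.card ι * M < Module.finrank F V) :
    ∃ v ≠ 0, ∀ i, Λ i v = 0 := by
  let Φ : V →ₗ[F] ι → degreeLT F M :=
    LinearMap.pi fun i => (Λ i).codRestrict _ fun v => mem_degreeLT.2 (hΛ i v)
  have : Module.Finite F (degreeLT F M) := Module.Finite.equiv (degreeLTEquiv F M).symm
  have hker : LinearMap.ker Φ ≠ ⊥ := by
    apply LinearMap.ker_ne_bot_of_finrank_lt
    rwa [Module.finrank_pi_fintype, Finset.sum_const, (degreeLTEquiv F M).finrank_eq,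
      Module.finrank_fin_fun, Finset.card_univ, smul_eq_mul]
  obtain ⟨v, hv, hv0⟩ := (Submodule.ne_bot_iff _).1 hker
  exact ⟨v, hv0, fun i => congrArg Subtype.val (congrFun (LinearMap.mem_ker.1 hv) i)⟩

theorem exists_family_sum_mul_X_pow_eq_zero {l J D d : ℕ} (L₁ L₂ : Fin l → F[X] →ₗ[F] F[X])
    (h₁ : ∀ k P, (L₁ k P).natDegree ≤ P.natDegree + d)
    (h₂ : ∀ k P, (L₂ k P).natDegree ≤ P.natDegree + d) (h : l * (D + d + J) < 2 * (J * D)) :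
    ∃ r s : Fin J → F[X], ¬(r = 0 ∧ s = 0) ∧ (∀ j, (r j).degree < D) ∧ (∀ j, (s j).degree < D) ∧
      ∀ k, ∑ j, (L₁ k (r j) + L₂ k (s j)) * X ^ (j : ℕ) = 0 := by
  let V := (Fin J → degreeLT F D) × (Fin J → degreeLT F D)
  have : Module.Finite F (degreeLT F D) := Module.Finite.equiv (degreeLTEquiv F D).symm
  let coord (π : V →ₗ[F] Fin J → degreeLT F D) (j : Fin J) : V →ₗ[F] F[X] :=
    (degreeLT F D).subtype ∘ₗ LinearMap.proj j ∘ₗ π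
  let Λ (k : Fin l) : V →ₗ[F] F[X] := ∑ j : Fin J, LinearMap.mulRight F (X ^ (j : ℕ)) ∘ₗ
    (L₁ k ∘ₗ coord (LinearMap.fst F _ _) j + L₂ k ∘ₗ coord (LinearMap.snd F _ _) j)
  have hΛ (k : Fin l) (v : V) :
      Λ k v = ∑ j, (L₁ k (v.1 j : F[X]) + L₂ k (v.2 j : F[X])) * X ^ (j : ℕ) := by
    simp only [Λ, coord, LinearMap.sum_apply, LinearMap.comp_apply, LinearMap.add_apply,
      LinearMap.mulRight_apply]
    rfl
  have hdegreeLT (P : degreeLT F D) : (P : F[X]).natDegree ≤ D :=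
    natDegree_le_of_degree_le (mem_degreeLT.1 P.2).le
  have hdeg (k : Fin l) (v : V) : (Λ k v).degree < (D + d + J : ℕ) := by
    rw [hΛ]
    refine mem_degreeLT.1 (Submodule.sum_mem _ fun j _ => mem_degreeLT.2 ?_)
    refine degree_le_natDegree.trans_lt (Nat.cast_lt.2 (natDegree_mul_le.trans_lt ?_))
    rw [natDegree_X_pow]
    have hadd : (L₁ k (v.1 j : F[X]) + L₂ k (v.2 j : F[X])).natDegree ≤ D + d :=
      (natDegree_add_le _ _).trans (max_le ((h₁ k _).trans (Nat.add_le_add_right (hdegreeLT _) d))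
        ((h₂ k _).trans (Nat.add_le_add_right (hdegreeLT _) d)))
    exact Nat.add_lt_add_of_le_of_lt hadd j.2
  have hfinrank : Module.finrank F V = 2 * (J * D) := by
    simp [V, Module.finrank_prod, Module.finrank_pi_fintype, (degreeLTEquiv F D).finrank_eq,
      two_mul]
  obtain ⟨v, hv0, hv⟩ := exists_ne_zero_forall_eq_zero_of_degree_lt Λ hdeg
    (by rwa [Fintype.card_fin, hfinrank])
  refine ⟨fun j => v.1 j, fun j => v.2 j, fun ⟨hr, hs⟩ => hv0 ?_, fun j => mem_degreeLT.1 (v.1 j).2,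
    fun j => mem_degreeLT.1 (v.2 j).2, fun k => hΛ k v ▸ hv k⟩
  exact Prod.ext (funext fun j => Subtype.ext (congrFun hr j))
    (funext fun j => Subtype.ext (congrFun hs j))

end AuxiliaryPolynomial

section Stepanov

open Polynomial

theorem eq_zero_of_X_pow_dvd_add_mul {F : Type*} [Field F] {f g r s : F[X]} {c : F} {n D : ℕ}
    (hf : ∀ c h, f ≠ C c * h ^ 2) (hc : c ≠ 0) (hfg : X ^ n ∣ f * g ^ 2 - C c)
    (hD : 2 * D + f.natDegree ≤ n + 1) (hr : r.degree < D) (hs : s.degree < D)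
    (h : X ^ n ∣ r + s * g) : r = 0 ∧ s = 0 := by
  have hf0 : f ≠ 0 := fun h0 => hf 0 0 (by simp [h0])
  have hdvd : X ^ n ∣ f * r ^ 2 - C c * s ^ 2 := by
    have hsum := (h.mul_right (f * (r - s * g))).add (hfg.mul_right (s ^ 2))
    convert hsum using 1
    ring
  have hdeg_sq {t : F[X]} (ht : t.degree < D) (ht0 : t ≠ 0) :
      2 * t.natDegree + f.natDegree < n := by
    have := (natDegree_lt_iff_degree_lt ht0).2 ht
    omega
  have heq : f * r ^ 2 = C c * s ^ 2 := by
    refine sub_eq_zero.1 (eq_zero_of_dvd_of_degree_lt hdvd ?_)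
    rw [degree_X_pow]
    refine (degree_sub_le _ _).trans_lt (max_lt ?_ ?_)
    · rcases eq_or_ne r 0 with rfl | hr0
      · simp
      rw [← natDegree_lt_iff_degree_lt (mul_ne_zero hf0 (pow_ne_zero 2 hr0)),
        natDegree_mul hf0 (pow_ne_zero 2 hr0), natDegree_pow]
      linarith [hdeg_sq hr hr0]
    · rcases eq_or_ne s 0 with rfl | hs0
      · simp
      rw [← natDegree_lt_iff_degree_lt (mul_ne_zero (C_ne_zero.2 hc) (pow_ne_zero 2 hs0)),
        natDegree_C_mul hc, natDegree_pow]
      linarith [hdeg_sq hs hs0]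
  have hr0 : r = 0 := by
    by_contra hr0
    obtain ⟨t, rfl⟩ : r ∣ s := by
      rw [← UniqueFactorizationMonoid.pow_dvd_pow_iff_dvd two_ne_zero]
      refine ⟨C c⁻¹ * f, ?_⟩
      rw [mul_left_comm, mul_comm (r ^ 2), heq, ← mul_assoc, ← C_mul, inv_mul_cancel₀ hc, C_1,
        one_mul]
    refine hf c t (mul_right_cancel₀ (pow_ne_zero 2 hr0) ?_)
    rw [heq, mul_pow]
    ring
  refine ⟨hr0, ?_⟩
  simpa [hr0, hc] using heq.symm

theorem eq_zero_of_sum_add_mul_mul_X_pow_eq_zero {F : Type*} [Field F] {f g : F[X]} {c : F}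
    {n D : ℕ} (hf : ∀ c h, f ≠ C c * h ^ 2) (hc : c ≠ 0) (hfg : X ^ n ∣ f * g ^ 2 - C c)
    (hD : 2 * D + f.natDegree ≤ n + 1) {J : ℕ} {r s : Fin J → F[X]}
    (hr : ∀ j, (r j).degree < D) (hs : ∀ j, (s j).degree < D)
    (h : ∑ j, (r j + s j * g) * X ^ (n * j : ℕ) = 0) : r = 0 ∧ s = 0 := by
  induction J with
  | zero => exact ⟨Subsingleton.elim _ _, Subsingleton.elim _ _⟩
  | succ J ih =>
    have hsplit : ∑ j, (r j + s j * g) * X ^ (n * j : ℕ) =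
        r 0 + s 0 * g + X ^ n * ∑ j : Fin J, (r j.succ + s j.succ * g) * X ^ (n * j : ℕ) := by
      rw [Fin.sum_univ_succ, Finset.mul_sum]
      congr 1
      · simp
      · exact Finset.sum_congr rfl fun j _ => by rw [Fin.val_succ]; ring
    rw [hsplit] at h
    obtain ⟨hr0, hs0⟩ := eq_zero_of_X_pow_dvd_add_mul hf hc hfg hD (hr 0) (hs 0)
      ⟨_, (neg_eq_of_add_eq_zero_left h).symm.trans (mul_neg _ _).symm⟩
    rw [hr0, hs0, zero_mul, zero_add, zero_add] at h
    obtain ⟨hr', hs'⟩ := ih (fun j => hr j.succ) (fun j => hs j.succ)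
      ((mul_eq_zero_iff_left (pow_ne_zero n X_ne_zero)).1 h)
    exact ⟨funext (Fin.cases hr0 (congrFun hr')), funext (Fin.cases hs0 (congrFun hs'))⟩

variable {F : Type*} [Field F] [Fintype F]

local notation "q" => Fintype.card F

theorem X_sub_C_pow_card_dvd_X_pow_sub_C (x : F) (j : ℕ) :
    (X - C x) ^ q ∣ X ^ (q * j) - C (x ^ j) := by
  have hfrob : (X ^ j - C (x ^ j) : F[X]) ^ q = X ^ (q * j) - C (x ^ j) := by
    rw [← FiniteField.expand_card, map_sub, map_pow, expand_X, expand_C, ← pow_mul]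
  rw [← hfrob, C_pow]
  exact pow_dvd_pow_of_dvd (sub_dvd_pow_sub_pow _ _ _) _

theorem X_pow_card_dvd_pow_card_sub_C_eval (f : F[X]) : X ^ q ∣ f ^ q - C (f.eval 0) := by
  have hfrob : (f - C (f.eval 0)) ^ q = f ^ q - C (f.eval 0) := by
    rw [← FiniteField.expand_card, map_sub, FiniteField.expand_card, expand_C]
  rw [← hfrob]
  refine pow_dvd_pow_of_dvd ?_ _
  simpa using X_sub_C_dvd_sub_C_eval (p := f) (a := 0)

/-- Modulo `(X - C x) ^ q` the factor `X ^ (q * n j)` is the constant `x ^ n j`, so Hasse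
derivatives of order `< l` pass through it; at `x` the extra factor `f ^ e` of the second summands
becomes `a`. -/
theorem X_sub_C_pow_dvd_of_sum_eq_zero {ι : Type*} [Fintype ι] {f : F[X]} {e l : ℕ} {a : F}
    (hl : l ≤ q) (n : ι → ℕ) {r s : ι → F[X]} {L₁ L₂ : ℕ → F[X] → F[X]}
    (hL₁ : ∀ k P, hasseDeriv k (f ^ l * P) = f ^ (l - k) * L₁ k P)
    (hL₂ : ∀ k P, hasseDeriv k (f ^ (l + e) * P) = f ^ (l + e - k) * L₂ k P)
    (h : ∀ k < l, ∑ j, (L₁ k (r j) + a • L₂ k (s j)) * X ^ n j = 0) {x : F}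
    (hx : f.eval x ^ e = a) :
    (X - C x) ^ l ∣ f ^ l * ∑ j, (r j + s j * f ^ e) * X ^ (q * n j) := by
  set W : F[X] := ∑ j, C (x ^ n j) * (f ^ l * r j + f ^ (l + e) * s j)
  have hsub : (X - C x) ^ l ∣ f ^ l * ∑ j, (r j + s j * f ^ e) * X ^ (q * n j) - W := by
    rw [Finset.mul_sum, ← Finset.sum_sub_distrib]
    refine Finset.dvd_sum fun j _ => ?_
    have hfactor : f ^ l * ((r j + s j * f ^ e) * X ^ (q * n j)) -
        C (x ^ n j) * (f ^ l * r j + f ^ (l + e) * s j) =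
        f ^ l * (r j + s j * f ^ e) * (X ^ (q * n j) - C (x ^ n j)) := by ring
    rw [hfactor]
    exact ((pow_dvd_pow _ hl).trans (X_sub_C_pow_card_dvd_X_pow_sub_C x _)).mul_left _
  refine (dvd_iff_dvd_of_dvd_sub hsub).2 (X_sub_C_pow_dvd_of_eval_hasseDeriv_eq_zero fun k hk => ?_)
  have hsplit : l + e - k = l - k + e := by omega
  have heval := congrArg (fun P => f.eval x ^ (l - k) * P.eval x) (h k hk)
  simp only [eval_zero, mul_zero, eval_finsetSum, Finset.mul_sum] at heval
  rw [map_sum, eval_finsetSum, ← heval]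
  refine Finset.sum_congr rfl fun j _ => ?_
  rw [← smul_eq_C_mul, map_smul, map_add, hL₁, hL₂, hsplit, pow_add]
  simp only [eval_smul, eval_add, eval_mul, eval_pow, eval_X, smul_eq_mul, hx]
  ring

theorem exists_family_forall_X_sub_C_pow_dvd {f : F[X]} (hf : f ≠ 0) (e : ℕ) (a : F) {l J D : ℕ}
    (hl : l ≤ q) (h : l * (D + l * f.natDegree + J) < 2 * (J * D)) :
    ∃ r s : Fin J → F[X], ¬(r = 0 ∧ s = 0) ∧ (∀ j, (r j).degree < D) ∧ (∀ j, (s j).degree < D) ∧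
      ∀ x, f.eval x ^ e = a →
        (X - C x) ^ l ∣ f ^ l * ∑ j, (r j + s j * f ^ e) * X ^ (q * j : ℕ) := by
  choose L hL using exists_linearMap_hasseDeriv_pow_mul hf
  have hdeg {b k : ℕ} (hlb : l ≤ b) (hk : k < l) (P : F[X]) :
      (L b k P).natDegree ≤ P.natDegree + l * f.natDegree :=
    (natDegree_le_of_hasseDeriv_pow_mul_eq hf (hk.le.trans hlb) (hL b k P)).trans
      (Nat.add_le_add_left (Nat.mul_le_mul_right _ hk.le) _)
  obtain ⟨r, s, hne, hr, hs, hsum⟩ := exists_family_sum_mul_X_pow_eq_zero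
    (fun k : Fin l => L l k) (fun k : Fin l => a • L (l + e) k)
    (fun k P => hdeg le_rfl k.2 P)
    (fun k P => (natDegree_smul_le _ _).trans (hdeg (Nat.le_add_right l e) k.2 P)) h
  exact ⟨r, s, hne, hr, hs, fun x hx =>
    X_sub_C_pow_dvd_of_sum_eq_zero hl _ (hL l) (hL (l + e)) (fun k hk => hsum ⟨k, hk⟩) hx⟩

theorem natDegree_sum_add_mul_mul_X_pow_le {R : Type*} [Semiring R] {J D n : ℕ}
    {r s : Fin J → R[X]} (g : R[X]) (hr : ∀ j, (r j).degree < D)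
    (hs : ∀ j, (s j).degree < D) :
    (∑ j, (r j + s j * g) * X ^ (n * j : ℕ)).natDegree ≤ D + g.natDegree + n * J := by
  refine natDegree_sum_le_of_forall_le _ _ fun j _ => ?_
  have hrj := natDegree_le_of_degree_le (hr j).le
  have hsj := natDegree_le_of_degree_le (hs j).le
  have hadd : (r j + s j * g).natDegree ≤ D + g.natDegree :=
    (natDegree_add_le _ _).trans (max_le (by omega) (natDegree_mul_le.trans (by omega)))
  exact natDegree_mul_le.trans (add_le_add hadd
    ((natDegree_X_pow_le _).trans (Nat.mul_le_mul_left n j.2.le)))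

theorem mul_card_filter_eval_pow_eq_le [DecidableEq F] (hF : ringChar F ≠ 2) {f : F[X]}
    (hf : ∀ c g, f ≠ C c * g ^ 2) (hf0 : f.eval 0 ≠ 0) (a : F) {l J D : ℕ} (hl : l ≤ q)
    (hD : 2 * D + f.natDegree ≤ q + 1) (h : l * (D + l * f.natDegree + J) < 2 * (J * D)) :
    l * (Finset.univ.filter fun x => f.eval x ^ (q / 2) = a).card ≤
      l * f.natDegree + (D + q / 2 * f.natDegree + q * J) := by
  have hfne : f ≠ 0 := fun h0 => hf 0 0 (by simp [h0])
  obtain ⟨r, s, hne, hr, hs, hdvd⟩ := exists_family_forall_X_sub_C_pow_dvd hfne (q / 2) a hl h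
  have hfg : X ^ q ∣ f * (f ^ (q / 2)) ^ 2 - C (f.eval 0) := by
    have hq : q / 2 * 2 + 1 = q := by
      have := FiniteField.odd_card_of_char_ne_two hF
      omega
    rw [← pow_mul, ← pow_succ', hq]
    exact X_pow_card_dvd_pow_card_sub_C_eval f
  have hG : ∑ j, (r j + s j * f ^ (q / 2)) * X ^ (q * j : ℕ) ≠ 0 := fun h0 =>
    hne (eq_zero_of_sum_add_mul_mul_X_pow_eq_zero hf hf0 hfg hD hr hs h0)
  refine (mul_card_le_natDegree_of_X_sub_C_pow_dvd (mul_ne_zero (pow_ne_zero l hfne) hG)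
    fun x hx => hdvd x (Finset.mem_filter.1 hx).2).trans (natDegree_mul_le.trans ?_)
  rw [natDegree_pow, ← natDegree_pow f (q / 2)]
  exact Nat.add_le_add_left (natDegree_sum_add_mul_mul_X_pow_le _ hr hs) _

end Stepanov

section WeilBound

open Polynomial

theorem one_le_sqrt_card (α : Type*) [Fintype α] [Nonempty α] : 1 ≤ √(Fintype.card α : ℝ) :=
  Real.one_le_sqrt.2 (by exact_mod_cast Fintype.card_pos)

variable {F : Type*} [Field F] [Fintype F] [DecidableEq F]

local notation "q" => Fintype.card F

theorem natDegree_pos_of_ne_C_mul_sq {R : Type*} [Semiring R] {f : R[X]}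
    (hf : ∀ c g, f ≠ C c * g ^ 2) : 0 < f.natDegree := by
  refine Nat.pos_of_ne_zero fun h0 => hf (f.coeff 0) 1 ?_
  rw [one_pow, mul_one, ← eq_C_of_natDegree_eq_zero h0]

theorem mul_card_filter_eval_pow_eq_le_of_four_mul_sq_le (hF : ringChar F ≠ 2) {f : F[X]}
    (hf : ∀ c g, f ≠ C c * g ^ 2) (hf0 : f.eval 0 ≠ 0) (a : F) {h : ℕ} (hq : 4 * h ^ 2 ≤ q)
    (hdeg : f.natDegree + 1 ≤ h) :
    4 * h * (Finset.univ.filter fun x => f.eval x ^ (q / 2) = a).card ≤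
      4 * h * f.natDegree + 2 * q * h + 10 * q * f.natDegree := by
  have hm := natDegree_pos_of_ne_C_mul_sq hf
  have hmq : f.natDegree ≤ q := by nlinarith
  have hparams : 2 * h * ((q - f.natDegree) / 2 + 2 * h * f.natDegree +
      (h + 2 * f.natDegree + 2)) < 2 * ((h + 2 * f.natDegree + 2) * ((q - f.natDegree) / 2)) := by
    have hD : 4 * h ^ 2 ≤ 2 * ((q - f.natDegree) / 2) + f.natDegree + 1 := by omega
    generalize f.natDegree = m at *
    generalize (q - m) / 2 = D at *
    nlinarith [Nat.mul_le_mul_left (2 * m + 2) hD, Nat.mul_le_mul_left h hdeg,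
      Nat.mul_le_mul_right (m + 1) hdeg]
  have hbound := mul_card_filter_eval_pow_eq_le hF hf hf0 a (by nlinarith) (by omega) hparams
  have hhalf := Nat.mul_le_mul_right f.natDegree (Nat.mul_div_le q 2)
  have hD : 2 * ((q - f.natDegree) / 2) ≤ q := by omega
  nlinarith

theorem card_filter_eval_pow_eq_le_of_natDegree_le_sqrt (hF : ringChar F ≠ 2) {f : F[X]}
    (hf : ∀ c g, f ≠ C c * g ^ 2) (hf0 : f.eval 0 ≠ 0) (hdeg : 20 * f.natDegree ≤ Nat.sqrt q)
    (a : F) :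
    ((Finset.univ.filter fun x => f.eval x ^ (q / 2) = a).card : ℝ) ≤
      q / 2 + 10 * f.natDegree * √q := by
  have hm := natDegree_pos_of_ne_C_mul_sq hf
  obtain ⟨h, hh⟩ : ∃ h, h = Nat.sqrt q / 2 := ⟨_, rfl⟩
  have hhq : 4 * h ^ 2 ≤ q := by nlinarith [Nat.sqrt_le q, (by omega : 2 * h ≤ Nat.sqrt q)]
  have hcard := mul_card_filter_eval_pow_eq_le_of_four_mul_sq_le hF hf hf0 a hhq (by omega)
  have hsqrt : √(q : ℝ) ≤ 3 * h := by
    have : Nat.sqrt q + 1 ≤ 3 * h := by omega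
    exact Real.real_sqrt_lt_nat_sqrt_succ.le.trans (by exact_mod_cast this)
  have hone : 1 ≤ √(q : ℝ) := one_le_sqrt_card F
  refine le_of_mul_le_mul_left (?_ : 4 * (h : ℝ) * _ ≤ _) (by linarith)
  calc (4 * h * (Finset.univ.filter fun x => f.eval x ^ (q / 2) = a).card : ℝ)
      ≤ 4 * h * f.natDegree * 1 + 2 * q * h + 10 * f.natDegree * √q * √q := by
        rw [mul_assoc _ √(q : ℝ), Real.mul_self_sqrt (Nat.cast_nonneg _)]
        exact_mod_cast hcard.trans_eq (by ring)
    _ ≤ 4 * h * f.natDegree * √q + 2 * q * h + 10 * f.natDegree * √q * (3 * h) := by gcongr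
    _ ≤ 4 * h * (q / 2 + 10 * f.natDegree * √q) := by
        have : 0 ≤ h * f.natDegree * √(q : ℝ) := by positivity
        linarith

theorem taylor_ne_C_mul_sq {R : Type*} [CommRing R] {f : R[X]} (hf : ∀ c g, f ≠ C c * g ^ 2)
    (b c : R) (g : R[X]) : taylor b f ≠ C c * g ^ 2 := fun h => by
  refine hf c (taylor (-b) g) ?_
  have := congrArg (taylor (-b)) h
  rwa [taylor_taylor, neg_add_cancel, taylor_zero, taylor_mul, taylor_pow, taylor_C] at this

theorem card_filter_eval_pow_eq_le (hF : ringChar F ≠ 2) {f : F[X]}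
    (hf : ∀ c g, f ≠ C c * g ^ 2) (a : F) :
    ((Finset.univ.filter fun x => f.eval x ^ (q / 2) = a).card : ℝ) ≤
      q / 2 + 10 * f.natDegree * √q := by
  rcases le_or_gt (20 * f.natDegree) (Nat.sqrt q) with hdeg | hdeg
  · have hlt : f.natDegree < q := by
      have := Nat.sqrt_le_self q
      have : 0 < q := Fintype.card_pos
      omega
    obtain ⟨b, hb⟩ := exists_eval_ne_zero_of_natDegree_lt_card f (fun h0 => hf 0 0 (by simp [h0]))
      (by simpa using hlt)
    have htaylor := card_filter_eval_pow_eq_le_of_natDegree_le_sqrt hF (taylor_ne_C_mul_sq hf b)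
      (by rwa [taylor_eval, zero_add]) (by rwa [natDegree_taylor]) a
    rw [natDegree_taylor] at htaylor
    refine le_of_eq_of_le (congrArg _ ?_) htaylor
    refine (Finset.card_equiv (Equiv.addRight b) fun x => ?_).symm
    simp only [Finset.mem_filter_univ, taylor_eval, Equiv.coe_addRight]
  · have hsqrt : √(q : ℝ) ≤ 20 * f.natDegree :=
      Real.real_sqrt_lt_nat_sqrt_succ.le.trans (by exact_mod_cast hdeg)
    calc ((Finset.univ.filter fun x => f.eval x ^ (q / 2) = a).card : ℝ)
        ≤ q := Nat.cast_le.2 (Finset.card_le_univ _)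
      _ = q / 2 + √q * √q / 2 := by rw [Real.mul_self_sqrt (Nat.cast_nonneg _)]; ring
      _ ≤ q / 2 + 10 * f.natDegree * √q := by nlinarith [Real.sqrt_nonneg (q : ℝ)]

theorem mul_quadraticChar_le (hF : ringChar F ≠ 2) {ε : ℤ} (hε : ε = 1 ∨ ε = -1) (y : F) :
    ε * quadraticChar F y ≤
      2 * (if y ^ (q / 2) = ε then 1 else 0) - 1 + (if y = 0 then 1 else 0) := by
  rcases eq_or_ne y 0 with rfl | hy
  · rw [quadraticChar_zero]
    split_ifs <;> simp_all
  rw [← quadraticChar_eq_pow_of_char_ne_two' hF, if_neg hy]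
  rcases hε with rfl | rfl <;> rcases quadraticChar_dichotomy hy with h | h <;> rw [h] <;>
    split_ifs <;> simp_all

theorem abs_sum_quadraticChar_eval_le (hF : ringChar F ≠ 2) {f : F[X]}
    (hf : ∀ c g, f ≠ C c * g ^ 2) :
    |∑ x, (quadraticChar F (f.eval x) : ℝ)| ≤ 21 * f.natDegree * √q := by
  have hf0 : f ≠ 0 := fun h0 => hf 0 0 (by simp [h0])
  have hroots : (Finset.univ.filter fun x => f.eval x = 0).card ≤ f.natDegree :=
    card_le_degree_of_subset_roots fun x hx => (mem_roots hf0).2 (Finset.mem_filter.1 hx).2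
  have hsigned {ε : ℤ} (hε : ε = 1 ∨ ε = -1) :
      ε * ∑ x, (quadraticChar F (f.eval x) : ℝ) ≤ 21 * f.natDegree * √q := by
    have hle := Finset.sum_le_sum fun x (_ : x ∈ Finset.univ) =>
      mul_quadraticChar_le hF hε (f.eval x)
    rw [← Finset.mul_sum, Finset.sum_add_distrib, Finset.sum_sub_distrib, ← Finset.mul_sum,
      Finset.sum_boole, Finset.sum_boole, Finset.sum_const, Finset.card_univ, nsmul_one] at hle
    have hN := card_filter_eval_pow_eq_le hF hf (ε : F)
    have hone : 1 ≤ √(q : ℝ) := one_le_sqrt_card F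
    calc ε * ∑ x, (quadraticChar F (f.eval x) : ℝ)
        ≤ 2 * (Finset.univ.filter fun x => f.eval x ^ (q / 2) = ε).card - q +
          (Finset.univ.filter fun x => f.eval x = 0).card := by exact_mod_cast hle
      _ ≤ 2 * (q / 2 + 10 * f.natDegree * √q) - q + f.natDegree * 1 := by
          rw [mul_one]
          gcongr
      _ ≤ 2 * (q / 2 + 10 * f.natDegree * √q) - q + f.natDegree * √q := by gcongr
      _ = 21 * f.natDegree * √q := by ring
  exact abs_le'.2 ⟨by simpa using hsigned (.inl rfl), by simpa using hsigned (.inr rfl)⟩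

theorem ne_C_mul_sq_of_squarefree {R : Type*} [CommRing R] [IsDomain R] {f : R[X]}
    (hf : Squarefree f) (hdeg : 0 < f.natDegree) (c : R) (g : R[X]) : f ≠ C c * g ^ 2 := by
  rintro rfl
  have hg : g.natDegree = 0 := natDegree_eq_zero_of_isUnit (hf g ⟨C c, by ring⟩)
  have hle := natDegree_C_mul_le c (g ^ 2)
  rw [natDegree_pow, hg, mul_zero] at hle
  exact hdeg.ne' (Nat.le_zero.1 hle)

theorem abs_sum_prod_quadraticChar_add_le (hF : ringChar F ≠ 2) {S : Finset F}
    (hS : S.Nonempty) :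
    |∑ x, ∏ t ∈ S, (quadraticChar F (x + t) : ℝ)| ≤ 21 * S.card * √q := by
  set f : F[X] := ∏ t ∈ S, (X - C (-t))
  have hdeg : f.natDegree = S.card := natDegree_finsetProd_X_sub_C_eq_card S _
  have hsquarefree : Squarefree f :=
    (separable_prod_X_sub_C_iff'.2 fun _ _ _ _ h => neg_injective h).squarefree
  have heval (x : F) :
      (quadraticChar F (f.eval x) : ℝ) = ∏ t ∈ S, (quadraticChar F (x + t) : ℝ) := by
    simp only [f, eval_prod, eval_sub, eval_X, eval_C, sub_neg_eq_add, map_prod, Int.cast_prod]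
  simpa only [heval, hdeg] using abs_sum_quadraticChar_eval_le hF
    (ne_C_mul_sq_of_squarefree hsquarefree (hdeg ▸ hS.card_pos))

end WeilBound

/-- The set `A` of the theorem over an arbitrary commutative ring: the units `a` such that `a + τ`
is the square of a unit for every `τ ∈ T`. -/
def squareTranslates {R : Type*} [CommRing R] (T : Finset R) : Set Rˣ :=
  {a | ∀ τ ∈ T, ∃ u : Rˣ, (a : R) + τ = (u : R) ^ 2}

section FiniteField

variable {F : Type*} [Field F] [Fintype F] [DecidableEq F]

local notation "q" => Fintype.card F

theorem abs_quadraticChar_le_one (x : F) : |(quadraticChar F x : ℝ)| ≤ 1 := by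
  rcases quadraticChar_isQuadratic F x with h | h | h <;> simp [h]

theorem abs_sum_units_prod_quadraticChar_add_le (hF : ringChar F ≠ 2) {S : Finset F}
    (hS : S.Nonempty) :
    |∑ a : Fˣ, ∏ t ∈ S, (quadraticChar F (a + t) : ℝ)| ≤ 22 * S.card * √q := by
  have hsum : ∑ x, ∏ t ∈ S, (quadraticChar F (x + t) : ℝ) =
      ∏ t ∈ S, (quadraticChar F (0 + t) : ℝ) +
        ∑ a : Fˣ, ∏ t ∈ S, (quadraticChar F (a + t) : ℝ) := by
    rw [Fintype.sum_eq_add_sum_subtype_ne _ (0 : F)]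
    exact congrArg _ (Fintype.sum_equiv unitsEquivNeZero _ _ fun _ => rfl).symm
  have hzero : |∏ t ∈ S, (quadraticChar F (0 + t) : ℝ)| ≤ 1 := by
    rw [Finset.abs_prod]
    exact Finset.prod_le_one (fun _ _ => abs_nonneg _) fun _ _ => abs_quadraticChar_le_one _
  have hone : 1 ≤ (S.card : ℝ) * √q :=
    one_le_mul_of_one_le_of_one_le (by exact_mod_cast hS.card_pos) (one_le_sqrt_card F)
  calc |∑ a : Fˣ, ∏ t ∈ S, (quadraticChar F (a + t) : ℝ)|
      = |∑ x, ∏ t ∈ S, (quadraticChar F (x + t) : ℝ) - ∏ t ∈ S, (quadraticChar F (0 + t) : ℝ)| := by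
        rw [hsum, add_sub_cancel_left]
    _ ≤ 21 * S.card * √q + 1 :=
        (abs_sub _ _).trans (add_le_add (abs_sum_prod_quadraticChar_add_le hF hS) hzero)
    _ ≤ 22 * S.card * √q := by linarith

theorem abs_sum_units_prod_one_add_quadraticChar_sub_le (hF : ringChar F ≠ 2) (T : Finset F) :
    |∑ a : Fˣ, ∏ t ∈ T, (1 + (quadraticChar F (a + t) : ℝ)) - Fintype.card Fˣ| ≤
      2 ^ T.card * (22 * T.card * √q) := by
  have hexpand : ∑ a : Fˣ, ∏ t ∈ T, (1 + (quadraticChar F (a + t) : ℝ)) - Fintype.card Fˣ =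
      ∑ S ∈ T.powerset.erase ∅, ∑ a : Fˣ, ∏ t ∈ S, (quadraticChar F (a + t) : ℝ) := by
    rw [Finset.sum_erase_eq_sub (Finset.empty_mem_powerset T), Finset.sum_comm]
    simp only [Finset.prod_one_add, Finset.prod_empty, Finset.sum_const, Finset.card_univ,
      nsmul_one]
  rw [hexpand]
  calc |∑ S ∈ T.powerset.erase ∅, ∑ a : Fˣ, ∏ t ∈ S, (quadraticChar F (a + t) : ℝ)|
      ≤ ∑ S ∈ T.powerset.erase ∅, |∑ a : Fˣ, ∏ t ∈ S, (quadraticChar F (a + t) : ℝ)| :=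
        Finset.abs_sum_le_sum_abs _ _
    _ ≤ ∑ S ∈ T.powerset.erase ∅, 22 * T.card * √q := by
        refine Finset.sum_le_sum fun S hS => ?_
        obtain ⟨hne, hST⟩ := Finset.mem_erase.1 hS
        refine (abs_sum_units_prod_quadraticChar_add_le hF
          (Finset.nonempty_iff_ne_empty.2 hne)).trans ?_
        gcongr
        exact Finset.mem_powerset.1 hST
    _ ≤ ∑ S ∈ T.powerset, 22 * T.card * √q :=
        Finset.sum_le_sum_of_subset_of_nonneg (Finset.erase_subset _ _) fun _ _ _ => by positivity
    _ = 2 ^ T.card * (22 * T.card * √q) := by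
        rw [Finset.sum_const, Finset.card_powerset, nsmul_eq_mul, Nat.cast_pow, Nat.cast_ofNat]

theorem exists_unit_eq_sq_iff_quadraticChar_eq_one (y : F) :
    (∃ u : Fˣ, y = (u : F) ^ 2) ↔ quadraticChar F y = 1 := by
  constructor
  · rintro ⟨u, rfl⟩
    exact quadraticChar_sq_one' u.ne_zero
  · intro h
    have hy : y ≠ 0 := by
      rintro rfl
      simp at h
    obtain ⟨v, rfl⟩ := (quadraticChar_one_iff_isSquare hy).1 h
    exact ⟨Units.mk0 v (left_ne_zero_of_mul hy), (sq v).symm⟩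

theorem prod_one_add_quadraticChar_eq_ite {T : Finset F} {x : F} (hx : ∀ t ∈ T, x + t ≠ 0) :
    ∏ t ∈ T, (1 + (quadraticChar F (x + t) : ℝ)) =
      if ∀ t ∈ T, quadraticChar F (x + t) = 1 then 2 ^ T.card else 0 := by
  split_ifs with h
  · exact Finset.prod_eq_pow_card fun t ht => by rw [h t ht]; norm_num
  · push Not at h
    obtain ⟨t, ht, hne⟩ := h
    refine Finset.prod_eq_zero ht ?_
    rw [(quadraticChar_dichotomy (hx t ht)).resolve_left hne]
    norm_num

theorem abs_pow_mul_ite_sub_prod_one_add_quadraticChar_le (T : Finset F) (x : F) :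
    |(2 ^ T.card * (if ∀ t ∈ T, quadraticChar F (x + t) = 1 then 1 else 0) : ℝ) -
        ∏ t ∈ T, (1 + (quadraticChar F (x + t) : ℝ))| ≤
      2 ^ T.card * (if ∃ t ∈ T, x + t = 0 then 1 else 0) := by
  by_cases hx : ∃ t ∈ T, x + t = 0
  · have hfactor (t : F) := abs_le.1 (abs_quadraticChar_le_one (x + t))
    have hnonneg (t : F) : 0 ≤ 1 + (quadraticChar F (x + t) : ℝ) := by linarith [hfactor t]
    have hle : ∏ t ∈ T, (1 + (quadraticChar F (x + t) : ℝ)) ≤ 2 ^ T.card :=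
      (Finset.prod_le_prod (fun t _ => hnonneg t) fun t _ => by linarith [hfactor t]).trans_eq
        (Finset.prod_const 2)
    rw [if_pos hx, mul_one]
    refine abs_sub_le_of_nonneg_of_le ?_ ?_
      (Finset.prod_nonneg fun t _ => hnonneg t) hle <;> split_ifs <;> simp
  · rw [if_neg hx, prod_one_add_quadraticChar_eq_ite fun t ht h0 => hx ⟨t, ht, h0⟩]
    simp

theorem card_filter_exists_add_eq_zero_le {R : Type*} [Ring R] [Fintype Rˣ] [DecidableEq R]
    (T : Finset R) :
    (Finset.univ.filter fun a : Rˣ => ∃ t ∈ T, (a : R) + t = 0).card ≤ T.card := by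
  refine Finset.card_le_card_of_injOn (fun a => -(a : R)) (fun a ha => ?_)
    fun a _ b _ hab => Units.ext (neg_injective hab)
  obtain ⟨t, ht, hat⟩ := (Finset.mem_filter.1 ha).2
  rwa [← neg_eq_of_add_eq_zero_right hat] at ht

theorem ncard_squareTranslates_eq_sum (T : Finset F) :
    ((squareTranslates T).ncard : ℝ) =
      ∑ a : Fˣ, if ∀ t ∈ T, quadraticChar F (a + t) = 1 then 1 else 0 := by
  rw [Finset.sum_boole, ← Set.ncard_coe_finset, Finset.coe_filter_univ]
  simp only [squareTranslates, exists_unit_eq_sq_iff_quadraticChar_eq_one]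

theorem abs_pow_mul_ncard_squareTranslates_sub_le (hF : ringChar F ≠ 2) (T : Finset F) :
    |2 ^ T.card * ((squareTranslates T).ncard : ℝ) - Fintype.card Fˣ| ≤
      2 ^ T.card * (23 * T.card * √q) := by
  have hprod : |2 ^ T.card * ((squareTranslates T).ncard : ℝ) -
      ∑ a : Fˣ, ∏ t ∈ T, (1 + (quadraticChar F (a + t) : ℝ))| ≤ 2 ^ T.card * T.card := by
    rw [ncard_squareTranslates_eq_sum, Finset.mul_sum, ← Finset.sum_sub_distrib]
    refine (Finset.abs_sum_le_sum_abs _ _).trans ((Finset.sum_le_sum fun (a : Fˣ) _ =>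
      abs_pow_mul_ite_sub_prod_one_add_quadraticChar_le T (a : F)).trans ?_)
    rw [← Finset.mul_sum, Finset.sum_boole]
    gcongr
    exact card_filter_exists_add_eq_zero_le T
  calc |2 ^ T.card * ((squareTranslates T).ncard : ℝ) - Fintype.card Fˣ|
      ≤ 2 ^ T.card * T.card + 2 ^ T.card * (22 * T.card * √q) :=
        (abs_sub_le _ _ _).trans
          (add_le_add hprod (abs_sum_units_prod_one_add_quadraticChar_sub_le hF T))
    _ = 2 ^ T.card * (T.card * 1 + 22 * T.card * √q) := by ring
    _ ≤ 2 ^ T.card * (T.card * √q + 22 * T.card * √q) := by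
        gcongr
        exact one_le_sqrt_card F
    _ = 2 ^ T.card * (23 * T.card * √q) := by ring

theorem abs_ncard_squareTranslates_sub_le (hF : ringChar F ≠ 2) (T : Finset F) :
    |((squareTranslates T).ncard : ℝ) - Fintype.card Fˣ / 2 ^ T.card| ≤
      46 * T.card * Fintype.card Fˣ / √q := by
  have hpow : (0 : ℝ) < 2 ^ T.card := by positivity
  have hsqrt : √(q : ℝ) ≤ 2 * Fintype.card Fˣ / √q := by
    rw [le_div_iff₀ ((one_le_sqrt_card F).trans_lt' one_pos),
      Real.mul_self_sqrt (Nat.cast_nonneg _), Fintype.card_units]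
    have := Fintype.one_lt_card (α := F)
    exact_mod_cast (by omega : q ≤ 2 * (q - 1))
  rw [← mul_le_mul_iff_right₀ hpow]
  calc 2 ^ T.card * |((squareTranslates T).ncard : ℝ) - Fintype.card Fˣ / 2 ^ T.card|
      = |2 ^ T.card * ((squareTranslates T).ncard : ℝ) - Fintype.card Fˣ| := by
        rw [← abs_of_pos hpow, ← abs_mul, abs_of_pos hpow, mul_sub, mul_div_cancel₀ _ hpow.ne']
    _ ≤ 2 ^ T.card * (23 * T.card * √q) := abs_pow_mul_ncard_squareTranslates_sub_le hF T
    _ ≤ 2 ^ T.card * (23 * T.card * (2 * Fintype.card Fˣ / √q)) := by gcongr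
    _ = 2 ^ T.card * (46 * T.card * Fintype.card Fˣ / √q) := by ring

end FiniteField

section LocalRing

theorem ncard_preimage_eq_card_ker_mul_ncard {G H : Type*} [Group G] [Group H] {φ : G →* H}
    (hφ : Function.Surjective φ) (S : Set H) :
    (φ ⁻¹' S).ncard = Nat.card φ.ker * S.ncard := by
  let e := QuotientGroup.quotientKerEquivOfSurjective φ hφ
  rw [← Set.ncard_preimage_of_injective_subset_range e.injective
    (by rw [e.surjective.range_eq]; exact S.subset_univ)]
  exact QuotientGroup.card_preimage_mk φ.ker (e ⁻¹' S)

variable {R S : Type*} [CommRing R] [Finite Rˣ] [CommRing S] (π : R →+* S) [IsLocalHom π]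

theorem exists_sq_eq_of_mem_ker_units_map (h2 : IsUnit (2 : S)) {w : Rˣ}
    (hw : Units.map (π : R →* S) w = 1) : ∃ z : Rˣ, Units.map (π : R →* S) z = 1 ∧ z ^ 2 = w := by
  have hinj : Function.Injective (powMonoidHom 2 : (Units.map (π : R →* S)).ker →* _) := by
    refine (injective_iff_map_eq_one _).2 fun ⟨u, hu⟩ hsq => Subtype.ext (Units.ext ?_)
    have hπu : π u = 1 := congrArg Units.val (MonoidHom.mem_ker.1 hu)
    have hunit : IsUnit ((u : R) + 1) :=
      (isUnit_map_iff π _).1 (by rwa [map_add, map_one, hπu, one_add_one_eq_two])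
    have hsq : (u : R) ^ 2 = 1 := congrArg (fun v => ((v : Rˣ) : R)) (congrArg Subtype.val hsq)
    refine sub_eq_zero.1 (hunit.mul_left_eq_zero.1 ?_)
    change ((u : R) - 1) * (u + 1) = 0
    linear_combination hsq
  obtain ⟨⟨z, hz⟩, hzw⟩ := Finite.surjective_of_injective hinj ⟨w, hw⟩
  exact ⟨z, hz, congrArg Subtype.val hzw⟩

theorem exists_unit_eq_sq_iff_map (hsurj : Function.Surjective (Units.map (π : R →* S)))
    (h2 : IsUnit (2 : S)) (y : R) :
    (∃ u : Rˣ, y = (u : R) ^ 2) ↔ ∃ v : Sˣ, π y = (v : S) ^ 2 := by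
  constructor
  · rintro ⟨u, rfl⟩
    exact ⟨Units.map π u, map_pow π _ 2⟩
  · rintro ⟨v, hv⟩
    obtain ⟨u, rfl⟩ := hsurj v
    obtain ⟨y, rfl⟩ : IsUnit y := (isUnit_map_iff π y).1 (hv ▸ (Units.isUnit _).pow 2)
    obtain ⟨z, -, hz⟩ := exists_sq_eq_of_mem_ker_units_map π h2 (w := y / u ^ 2) (by
      rw [map_div, map_pow, div_eq_one]
      exact Units.ext hv)
    refine ⟨z * u, congrArg Units.val (?_ : y = (z * u) ^ 2)⟩
    rw [mul_pow, hz, div_mul_cancel]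

theorem squareTranslates_eq_preimage [DecidableEq S]
    (hsurj : Function.Surjective (Units.map (π : R →* S))) (h2 : IsUnit (2 : S)) (T : Finset R) :
    squareTranslates T = Units.map (π : R →* S) ⁻¹' squareTranslates (T.image π) := by
  ext a
  simp [squareTranslates, exists_unit_eq_sq_iff_map π hsurj h2]

end LocalRing

theorem card_of_squares_set_general {R F : Type*} [CommRing R] [IsLocalRing R] [Finite R]
    [Field F] [DecidableEq F] {π : R →+* F} (hπ : Function.Surjective π) (hF : ringChar F ≠ 2)
    (T : Finset R) :
    |((squareTranslates T).ncard : ℝ) - Nat.card Rˣ / 2 ^ (T.image π).card| ≤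
      46 * (T.image π).card * Nat.card Rˣ / √(Nat.card F) := by
  have := Finite.of_surjective π hπ
  have := Fintype.ofFinite F
  have := hπ.isLocalHom
  have hsurj : Function.Surjective (Units.map (π : R →* F)) :=
    IsLocalRing.surjective_units_map_of_local_ringHom π hπ this
  have hcard : Nat.card Rˣ = Nat.card (Units.map (π : R →* F)).ker * Fintype.card Fˣ := by
    have := ncard_preimage_eq_card_ker_mul_ncard hsurj Set.univ
    rwa [Set.preimage_univ, Set.ncard_univ, Set.ncard_univ,
      Nat.card_eq_fintype_card (α := Fˣ)] at this
  rw [squareTranslates_eq_preimage π hsurj (Ring.two_ne_zero hF).isUnit,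
    ncard_preimage_eq_card_ker_mul_ncard hsurj, hcard, Nat.card_eq_fintype_card (α := F)]
  push_cast
  rw [mul_div_assoc, ← mul_sub, abs_mul, Nat.abs_cast, mul_left_comm, mul_div_assoc]
  exact mul_le_mul_of_nonneg_left (abs_ncard_squareTranslates_sub_le hF _) (Nat.cast_nonneg _)

theorem isLocalRing_zmod_prime_pow {p n : ℕ} (hp : p.Prime) (hn : n ≠ 0) :
    IsLocalRing (ZMod (p ^ n)) :=
  have : Fact p.Prime := ⟨hp⟩
  have : Fact (1 < p ^ n) := ⟨Nat.one_lt_pow hn hp.one_lt⟩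
  IsLocalRing.of_surjective' (PadicInt.toZModPow (p := p) n) (ZMod.ringHom_surjective _)

/-- With `A = {a ∈ (ZMod p^n)ˣ : a + τ is a unit square for all τ ∈ T}`
and `k` the number of distinct reductions mod `p` of elements of `T`,
`| |A| - φ(p^n)/2^k | ≤ C k φ(p^n)/√p` for an absolute constant `C > 0`. -/
theorem card_of_squares_set :
    ∃ C : ℝ, 0 < C ∧
      ∀ (p : ℕ) (hp : p.Prime), Odd p → ∀ n : ℕ, 1 ≤ n →
        letI : NeZero p := ⟨hp.ne_zero⟩
        ∀ T : Finset (ZMod (p ^ n)),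
          |((Finset.univ.filter (fun a : (ZMod (p ^ n))ˣ =>
                ∀ τ ∈ T, ∃ u : (ZMod (p ^ n))ˣ,
                  (a : ZMod (p ^ n)) + τ = (u : ZMod (p ^ n)) ^ 2)).card : ℝ)
              - ((p ^ n).totient : ℝ)
                  / 2 ^ ((T.image fun τ => ((ZMod.val τ : ZMod p))).card)|
            ≤ C * ((T.image fun τ => ((ZMod.val τ : ZMod p))).card : ℝ)
                * ((p ^ n).totient : ℝ) / Real.sqrt p := by
  refine ⟨46, by norm_num, fun p hp hodd n hn T => ?_⟩
  have := Fact.mk hp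
  have hlocal := isLocalRing_zmod_prime_pow hp (Nat.one_le_iff_ne_zero.1 hn)
  have hF : ringChar (ZMod p) ≠ 2 := by
    rw [ZMod.ringChar_zmod_n]
    rintro rfl
    exact Nat.not_odd_iff_even.2 even_two hodd
  have hdvd : p ∣ p ^ n := dvd_pow_self p (Nat.one_le_iff_ne_zero.1 hn)
  have hcast : (fun τ : ZMod (p ^ n) => (τ.val : ZMod p)) = ZMod.castHom hdvd (ZMod p) :=
    funext fun τ => ZMod.natCast_val τ
  rw [← Set.ncard_coe_finset, Finset.coe_filter_univ, hcast, ← ZMod.card_units_eq_totient,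
    ← Nat.card_eq_fintype_card]
  simpa only [squareTranslates, Nat.card_zmod] using
    card_of_squares_set_general (ZMod.castHom_surjective hdvd) hF T

end
end

section
/- Let M ≥ 2 be an integer. There is a constant C(M) > 0 depending only on M such that for every odd prime p, every integer n ≥ 2, and every sequence (a_h)_{h≥0} of real numbers with 0 ≤ a₀ ≤ 1 and 0 ≤ a_h ≤ 1/h for all h ≥ 1, one has Σ Π_{i=1}^M a_{h_i} ≤ C(M)·log^M(p^n)/p, where the sum runs over all M-tuples (h₁, …, h_M) of integers in {0, 1, …, p^n} for which there exist indices i ≠ j with h_i ≡ h_j (mod p) and h_i ≠ h_j. -/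
/-!
Of two distinct congruent entries `x < y` modulo `m`, the larger is `y = x + m * k` with `k ≥ 1`, so
its weight is at most `1 / (m * k)`. Summing over `y` with all other entries fixed therefore gains a
factor `1 / m` over the unrestricted harmonic sum, which is `O(log N)`, and a union bound over the
positions of `x` and `y` finishes the proof.
-/

open scoped BigOperators
open Filter MeasureTheory

noncomputable section

section Tuples

variable {ι α κ R : Type*}

lemma sum_filter_exists_le_sum_sum [AddCommMonoid R] [PartialOrder R] [IsOrderedAddMonoid R]
    (s : Finset α) (t : Finset κ) (P : κ → α → Prop) [∀ i, DecidablePred (P i)]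
    [DecidablePred fun x => ∃ i ∈ t, P i x] {f : α → R} (hf : ∀ x ∈ s, 0 ≤ f x) :
    ∑ x ∈ s with ∃ i ∈ t, P i x, f x ≤ ∑ i ∈ t, ∑ x ∈ s with P i x, f x := by
  simp only [Finset.sum_filter]
  rw [Finset.sum_comm]
  refine Finset.sum_le_sum fun x hx => ?_
  have hterm : ∀ i ∈ t, 0 ≤ if P i x then f x else 0 := fun i _ => by
    split_ifs
    exacts [hf x hx, le_rfl]
  split_ifs with hex
  · obtain ⟨i, hi, hPi⟩ := hex
    simpa only [if_pos hPi] using Finset.single_le_sum hterm hi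
  · exact Finset.sum_nonneg hterm

lemma exists_rel_ne_iff_exists_offDiag_rel_lt [Fintype ι] [LinearOrder α] (r : α → α → Prop)
    [Std.Symm r] (h : ι → α) :
    (∃ i j, i ≠ j ∧ r (h i) (h j) ∧ h i ≠ h j) ↔
      ∃ q ∈ Finset.univ.offDiag, r (h q.1) (h q.2) ∧ h q.1 < h q.2 := by
  simp only [Finset.mem_offDiag, Finset.mem_univ, true_and, Prod.exists]
  constructor
  · rintro ⟨i, j, hij, hrel, hne⟩
    rcases hne.lt_or_gt with hlt | hlt
    · exact ⟨i, j, hij, hrel, hlt⟩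
    · exact ⟨j, i, hij.symm, symm_of r hrel, hlt⟩
  · rintro ⟨i, j, hij, hrel, hlt⟩
    exact ⟨i, j, hij, hrel, hlt.ne⟩

variable [Fintype ι] [DecidableEq ι]

lemma sum_piFinset_eq_sum_sum_funSplitAt [AddCommMonoid R] (s : Finset α) (j : ι)
    (F : (ι → α) → R) :
    ∑ h ∈ Fintype.piFinset fun _ => s, F h =
      ∑ g ∈ Fintype.piFinset fun _ : {k // k ≠ j} => s,
        ∑ y ∈ s, F ((Equiv.funSplitAt j α).symm (y, g)) := by
  rw [← Finset.sum_product_right']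
  refine Finset.sum_equiv (Equiv.funSplitAt j α) (fun h => ?_) fun h _ => ?_
  · simp only [Fintype.mem_piFinset, Finset.mem_product, Equiv.funSplitAt_apply, Subtype.forall]
    exact ⟨fun hs => ⟨hs j, fun k _ => hs k⟩,
      fun hs k => (eq_or_ne k j).elim (fun hk => hk ▸ hs.1) (hs.2 k)⟩
  · exact congrArg F ((Equiv.funSplitAt j α).symm_apply_apply h).symm

lemma sum_prod_filter_rel_le [CommSemiring R] [PartialOrder R] [IsOrderedRing R]
    {s : Finset α} {w : α → R} (hw : ∀ x ∈ s, 0 ≤ w x) {r : α → α → Prop} [DecidableRel r] {c : R}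
    (hr : ∀ x ∈ s, ∑ y ∈ s with r x y, w y ≤ c * ∑ y ∈ s, w y) {i j : ι} (hij : i ≠ j) :
    ∑ h ∈ Fintype.piFinset fun _ : ι => s with r (h i) (h j), ∏ k, w (h k) ≤
      c * (∑ x ∈ s, w x) ^ Fintype.card ι := by
  have hsplit (y : α) (g : {k // k ≠ j} → α) :
      ∏ k, w ((Equiv.funSplitAt j α).symm (y, g) k) = w y * ∏ k, w (g k) := by
    rw [Fintype.prod_eq_mul_prod_subtype_ne _ j]
    congr 1
    · simp
    · exact Finset.prod_congr rfl fun k _ => by simp [k.2]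
  calc ∑ h ∈ Fintype.piFinset fun _ : ι => s with r (h i) (h j), ∏ k, w (h k)
      = ∑ g ∈ Fintype.piFinset fun _ : {k // k ≠ j} => s,
          (∑ y ∈ s with r (g ⟨i, hij⟩) y, w y) * ∏ k, w (g k) := by
        rw [Finset.sum_filter, sum_piFinset_eq_sum_sum_funSplitAt s j]
        refine Finset.sum_congr rfl fun g _ => ?_
        rw [Finset.sum_mul, Finset.sum_filter]
        refine Finset.sum_congr rfl fun y _ => ?_
        rw [hsplit]
        simp [hij]
    _ ≤ ∑ g ∈ Fintype.piFinset fun _ : {k // k ≠ j} => s,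
          (c * ∑ y ∈ s, w y) * ∏ k, w (g k) := by
        refine Finset.sum_le_sum fun g hg => ?_
        have hgs := Fintype.mem_piFinset.1 hg
        exact mul_le_mul_of_nonneg_right (hr _ (hgs _))
          (Finset.prod_nonneg fun k _ => hw _ (hgs k))
    _ = c * (∑ x ∈ s, w x) ^ Fintype.card ι := by
        rw [← Finset.mul_sum, ← Finset.prod_univ_sum, mul_assoc,
          ← Fintype.prod_eq_mul_prod_subtype_ne (fun _ : ι => ∑ x ∈ s, w x) j, Finset.prod_const,
          Finset.card_univ]

lemma sum_prod_filter_exists_rel_le [CommSemiring R] [PartialOrder R] [IsOrderedRing R]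
    {s : Finset α} {w : α → R} (hw : ∀ x ∈ s, 0 ≤ w x) {r : α → α → Prop} [DecidableRel r] {c : R}
    (hr : ∀ x ∈ s, ∑ y ∈ s with r x y, w y ≤ c * ∑ y ∈ s, w y)
    [DecidablePred fun h : ι → α => ∃ q ∈ Finset.univ.offDiag, r (h q.1) (h q.2)] :
    ∑ h ∈ Fintype.piFinset fun _ : ι => s with
        ∃ q ∈ Finset.univ.offDiag, r (h q.1) (h q.2), ∏ k, w (h k) ≤
      (Fintype.card ι * (Fintype.card ι - 1) : ℕ) * (c * (∑ x ∈ s, w x) ^ Fintype.card ι) := by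
  have hprod : ∀ h ∈ Fintype.piFinset fun _ : ι => s, 0 ≤ ∏ k, w (h k) := fun h hh =>
    Finset.prod_nonneg fun k _ => hw _ (Fintype.mem_piFinset.1 hh k)
  calc _ ≤ ∑ q ∈ (Finset.univ : Finset ι).offDiag,
          ∑ h ∈ Fintype.piFinset fun _ : ι => s with r (h q.1) (h q.2), ∏ k, w (h k) :=
        sum_filter_exists_le_sum_sum _ _ _ hprod
    _ ≤ ∑ _q ∈ (Finset.univ : Finset ι).offDiag, c * (∑ x ∈ s, w x) ^ Fintype.card ι :=
        Finset.sum_le_sum fun q hq =>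
          sum_prod_filter_rel_le hw hr (Finset.mem_offDiag.1 hq).2.2
    _ = _ := by
        rw [Finset.sum_const, Finset.offDiag_card, Finset.card_univ, nsmul_eq_mul,
          Nat.mul_sub_one]

end Tuples

/-- The pointwise largest sequence with `a 0 ≤ 1` and `a h ≤ 1 / h` for `h ≥ 1`, by which every
sequence `a` satisfying these bounds is majorized. The `max` avoids the junk value `0⁻¹ = 0`. -/
def recipMaxOne (h : ℕ) : ℝ := (max (h : ℝ) 1)⁻¹

lemma recipMaxOne_zero : recipMaxOne 0 = 1 := by simp [recipMaxOne]

lemma recipMaxOne_of_pos {h : ℕ} (hh : 0 < h) : recipMaxOne h = (h : ℝ)⁻¹ := by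
  rw [recipMaxOne, max_eq_left (Nat.one_le_cast.2 hh)]

lemma recipMaxOne_nonneg (h : ℕ) : 0 ≤ recipMaxOne h := by
  unfold recipMaxOne
  positivity

lemma sum_range_succ_recipMaxOne (N : ℕ) :
    ∑ h ∈ Finset.range (N + 1), recipMaxOne h = harmonic N + 1 := by
  rw [Finset.sum_range_succ', recipMaxOne_zero, harmonic]
  push_cast
  simp only [recipMaxOne_of_pos (Nat.succ_pos _), Nat.cast_succ]

lemma sum_range_succ_recipMaxOne_le_log {N : ℕ} (hN : 2 ≤ N) :
    ∑ h ∈ Finset.range (N + 1), recipMaxOne h ≤ 4 * Real.log N := by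
  have hlog : Real.log 2 ≤ Real.log N := Real.log_le_log two_pos (by exact_mod_cast hN)
  rw [sum_range_succ_recipMaxOne]
  linarith [harmonic_le_one_add_log N, Real.log_two_gt_d9]

lemma recipMaxOne_add_mul_le {m k : ℕ} (hm : 0 < m) (hk : 0 < k) (x : ℕ) :
    recipMaxOne (x + m * k) ≤ (m : ℝ)⁻¹ * recipMaxOne k := by
  have hmk : 0 < m * k := Nat.mul_pos hm hk
  rw [recipMaxOne_of_pos (hmk.trans_le (Nat.le_add_left _ _)), recipMaxOne_of_pos hk, ← mul_inv]
  exact inv_anti₀ (by exact_mod_cast hmk) (by exact_mod_cast Nat.le_add_left _ _)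

lemma exists_eq_add_mul_of_mod_eq_of_lt {m x y : ℕ} (hmod : x % m = y % m) (hxy : x < y) :
    ∃ k, 0 < k ∧ y = x + m * k := by
  obtain ⟨k, hk⟩ := (Nat.modEq_iff_dvd' hxy.le).1 hmod
  refine ⟨k, Nat.pos_of_ne_zero ?_, by omega⟩
  rintro rfl
  omega

lemma sum_recipMaxOne_mod_eq_lt_le {m : ℕ} (hm : 0 < m) (N x : ℕ) :
    ∑ y ∈ Finset.range N with x % m = y % m ∧ x < y, recipMaxOne y ≤
      (m : ℝ)⁻¹ * ∑ k ∈ Finset.range N, recipMaxOne k := by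
  have hsub : {y ∈ Finset.range N | x % m = y % m ∧ x < y} ⊆
      {k ∈ Finset.range N | 0 < k}.image fun k => x + m * k := by
    intro y hy
    obtain ⟨hyN, hmod, hxy⟩ := Finset.mem_filter.1 hy
    obtain ⟨k, hk, rfl⟩ := exists_eq_add_mul_of_mod_eq_of_lt hmod hxy
    have hkN : k < N :=
      ((Nat.le_mul_of_pos_left k hm).trans (Nat.le_add_left _ x)).trans_lt (Finset.mem_range.1 hyN)
    exact Finset.mem_image_of_mem _ (Finset.mem_filter.2 ⟨Finset.mem_range.2 hkN, hk⟩)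
  have hinj : Function.Injective fun k => x + m * k :=
    (add_right_injective x).comp (mul_right_injective₀ hm.ne')
  calc ∑ y ∈ Finset.range N with x % m = y % m ∧ x < y, recipMaxOne y
      ≤ ∑ y ∈ {k ∈ Finset.range N | 0 < k}.image fun k => x + m * k, recipMaxOne y :=
        Finset.sum_le_sum_of_subset_of_nonneg hsub fun y _ _ => recipMaxOne_nonneg y
    _ = ∑ k ∈ Finset.range N with 0 < k, recipMaxOne (x + m * k) :=
        Finset.sum_image hinj.injOn
    _ ≤ ∑ k ∈ Finset.range N with 0 < k, (m : ℝ)⁻¹ * recipMaxOne k :=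
        Finset.sum_le_sum fun k hk => recipMaxOne_add_mul_le hm (Finset.mem_filter.1 hk).2 x
    _ ≤ ∑ k ∈ Finset.range N, (m : ℝ)⁻¹ * recipMaxOne k :=
        Finset.sum_le_sum_of_subset_of_nonneg (Finset.filter_subset _ _) fun k _ _ =>
          mul_nonneg (by positivity) (recipMaxOne_nonneg k)
    _ = (m : ℝ)⁻¹ * ∑ k ∈ Finset.range N, recipMaxOne k := (Finset.mul_sum _ _ _).symm

lemma sum_prod_recipMaxOne_le {ι : Type*} [Fintype ι] [DecidableEq ι] {m : ℕ} (hm : 0 < m) (N : ℕ)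
    [DecidablePred fun h : ι → ℕ => ∃ i j, i ≠ j ∧ h i % m = h j % m ∧ h i ≠ h j] :
    ∑ h ∈ Fintype.piFinset fun _ : ι => Finset.range N with
        ∃ i j, i ≠ j ∧ h i % m = h j % m ∧ h i ≠ h j, ∏ i, recipMaxOne (h i) ≤
      (Fintype.card ι * (Fintype.card ι - 1) : ℕ) *
        ((m : ℝ)⁻¹ * (∑ h ∈ Finset.range N, recipMaxOne h) ^ Fintype.card ι) := by
  have : Std.Symm fun x y : ℕ => x % m = y % m := ⟨fun _ _ => Eq.symm⟩
  rw [Finset.filter_congr fun h _ =>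
    exists_rel_ne_iff_exists_offDiag_rel_lt (fun x y => x % m = y % m) h]
  exact sum_prod_filter_exists_rel_le (r := fun x y => x % m = y % m ∧ x < y)
    (fun h _ => recipMaxOne_nonneg h) fun x _ => sum_recipMaxOne_mod_eq_lt_le hm N x

theorem congruent_tuples_sum_bound_general {ι : Type*} [Fintype ι] [DecidableEq ι] {m N : ℕ}
    (hm : 0 < m) (hN : 2 ≤ N)
    [DecidablePred fun h : ι → ℕ => ∃ i j, i ≠ j ∧ h i % m = h j % m ∧ h i ≠ h j]
    {a : ℕ → ℝ} (ha0 : 0 ≤ a 0) (ha0_le : a 0 ≤ 1)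
    (ha : ∀ h : ℕ, 1 ≤ h → 0 ≤ a h ∧ a h ≤ 1 / (h : ℝ)) :
    ∑ h ∈ Fintype.piFinset fun _ : ι => Finset.range (N + 1) with
        ∃ i j, i ≠ j ∧ h i % m = h j % m ∧ h i ≠ h j, ∏ i, a (h i) ≤
      (Fintype.card ι * (Fintype.card ι - 1) : ℕ) * 4 ^ Fintype.card ι *
        Real.log N ^ Fintype.card ι / m := by
  have ha_nonneg (h : ℕ) : 0 ≤ a h := h.eq_zero_or_pos.elim (· ▸ ha0) fun hh => (ha h hh).1
  have ha_le (h : ℕ) : a h ≤ recipMaxOne h := by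
    rcases h.eq_zero_or_pos with rfl | hh
    · exact ha0_le.trans_eq recipMaxOne_zero.symm
    · exact (ha h hh).2.trans_eq (by rw [recipMaxOne_of_pos hh, one_div])
  calc _ ≤ ∑ h ∈ Fintype.piFinset fun _ : ι => Finset.range (N + 1) with
          ∃ i j, i ≠ j ∧ h i % m = h j % m ∧ h i ≠ h j, ∏ i, recipMaxOne (h i) :=
        Finset.sum_le_sum fun h _ =>
          Finset.prod_le_prod (fun i _ => ha_nonneg (h i)) fun i _ => ha_le (h i)
    _ ≤ (Fintype.card ι * (Fintype.card ι - 1) : ℕ) *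
          ((m : ℝ)⁻¹ * (∑ h ∈ Finset.range (N + 1), recipMaxOne h) ^ Fintype.card ι) :=
        sum_prod_recipMaxOne_le hm (N + 1)
    _ ≤ (Fintype.card ι * (Fintype.card ι - 1) : ℕ) *
          ((m : ℝ)⁻¹ * (4 * Real.log N) ^ Fintype.card ι) := by
        gcongr
        · exact Finset.sum_nonneg fun h _ => recipMaxOne_nonneg h
        · exact sum_range_succ_recipMaxOne_le_log hN
    _ = _ := by
        rw [mul_pow]
        ring

/-- For `M ≥ 2` there is `C(M) > 0` such that for every odd prime `p`,
every `n ≥ 2` and every sequence `0 ≤ a₀ ≤ 1`, `0 ≤ a_h ≤ 1/h` (`h ≥ 1`), the sum of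
`∏ a_{hᵢ}` over `M`-tuples in `{0,…,p^n}` having two distinct entries congruent mod `p`
is at most `C(M) log^M(p^n)/p`. -/
theorem congruent_tuples_sum_bound (M : ℕ) (hM : 2 ≤ M) :
    ∃ C : ℝ, 0 < C ∧
      ∀ p : ℕ, p.Prime → Odd p → ∀ n : ℕ, 2 ≤ n →
        ∀ a : ℕ → ℝ, 0 ≤ a 0 → a 0 ≤ 1 →
          (∀ h : ℕ, 1 ≤ h → 0 ≤ a h ∧ a h ≤ 1 / (h : ℝ)) →
          ∑ h ∈ (Fintype.piFinset fun _ : Fin M => Finset.range (p ^ n + 1)).filter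
              (fun h => ∃ i j : Fin M, i ≠ j ∧ h i % p = h j % p ∧ h i ≠ h j),
            ∏ i : Fin M, a (h i)
            ≤ C * Real.log ((p : ℝ) ^ n) ^ M / p := by
  have hpairs : 0 < M * (M - 1) := Nat.mul_pos (by omega) (by omega)
  refine ⟨(M * (M - 1) : ℕ) * 4 ^ M, by positivity, fun p hp _ n hn a ha0 ha0_le ha => ?_⟩
  have hpn : 2 ≤ p ^ n := hp.two_le.trans (Nat.le_self_pow (by omega) p)
  simpa only [Fintype.card_fin, Nat.cast_pow] using
    congruent_tuples_sum_bound_general (ι := Fin M) hp.pos hpn ha0 ha0_le ha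

end
end

section
/- Let p be an odd prime, n ≥ 1 an integer, and s, π integers with s ≡ π + 1 (mod p^n). Suppose ℓ ≥ 1 is an integer with 1 ≤ ℓ ≤ n such that p^ℓ exactly divides π − 1 (i.e. p^ℓ | π−1 and p^{ℓ+1} ∤ π−1). Then the number of residues x modulo p^n with x² − sx + π ≡ 0 (mod p^n) equals: if n is even, 2·p^ℓ when 1 ≤ ℓ ≤ n/2 − 1, and p^{n/2} when n/2 ≤ ℓ ≤ n; if n is odd, 2·p^ℓ when 1 ≤ ℓ ≤ (n−1)/2, and p^{(n−1)/2} when (n−1)/2 + 1 ≤ ℓ ≤ n. -/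
open scoped BigOperators
open Filter MeasureTheory

noncomputable section

/-!
Modulo `p ^ n` the quadratic factors as `(x - a) * (x - b)` with `a = π`, `b = 1`. Since `p ^ l`
exactly divides `a - b`, at most one of `x - a`, `x - b` is divisible by `p ^ (l + 1)`. When
`2 * l < n`, one factor therefore absorbs `p ^ (n - l)`, and the roots are two disjoint residue
classes modulo `p ^ (n - l)`. When `n ≤ 2 * l`, one factor is divisible by `p ^ ⌈n / 2⌉`, and as
`a ≡ b` to that precision so is the other: the roots are one residue class modulo `p ^ ⌈n / 2⌉`.
-/

theorem pow_dvd_or_pow_dvd_of_pow_dvd_mul {M : Type*} [CommMonoidWithZero M] [IsCancelMulZero M]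
    {p x y : M} (hp : Prime p) {i j n : ℕ} (hij : i + j ≤ n + 1) (h : p ^ n ∣ x * y) :
    p ^ i ∣ x ∨ p ^ j ∣ y := by
  by_contra! ⟨hx, hy⟩
  rw [← emultiplicity_lt_iff_not_dvd] at hx hy
  rw [pow_dvd_iff_le_emultiplicity, emultiplicity_mul hp] at h
  lift emultiplicity p x to ℕ using hx.ne_top with u
  lift emultiplicity p y to ℕ using hy.ne_top with v
  norm_cast at h hx hy
  omega

section IntegralDomain

variable {R : Type*} [CommRing R] [IsDomain R] {p a b : R} {l n : ℕ}

theorem pow_dvd_sub_mul_sub_iff_or (hp : Prime p) (hdvd : p ^ l ∣ a - b)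
    (hndvd : ¬p ^ (l + 1) ∣ a - b) (hln : 2 * l ≤ n) (x : R) :
    p ^ n ∣ (x - a) * (x - b) ↔ p ^ (n - l) ∣ x - a ∨ p ^ (n - l) ∣ x - b := by
  have hle : p ^ l ∣ p ^ (n - l) := pow_dvd_pow p (by omega)
  have hsplit : p ^ n = p ^ (n - l) * p ^ l := by rw [← pow_add, Nat.sub_add_cancel (by omega)]
  refine ⟨fun h ↦ ?_, ?_⟩
  · by_cases ha : p ^ (l + 1) ∣ x - a
    · have hb : ¬p ^ (l + 1) ∣ x - b := fun hb ↦
        hndvd (by simpa only [sub_sub_sub_cancel_left] using dvd_sub hb ha)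
      exact .inl ((pow_dvd_or_pow_dvd_of_pow_dvd_mul hp (by omega) h).resolve_right hb)
    · exact .inr ((pow_dvd_or_pow_dvd_of_pow_dvd_mul hp (by omega) h).resolve_left ha)
  · rw [hsplit]
    rintro (ha | hb)
    · have hb : p ^ l ∣ x - b := by
        simpa only [sub_add_sub_cancel] using dvd_add (hle.trans ha) hdvd
      exact mul_dvd_mul ha hb
    · have ha : p ^ l ∣ x - a := by
        simpa only [sub_sub_sub_cancel_right] using dvd_sub (hle.trans hb) hdvd
      exact mul_comm (x - a) _ ▸ mul_dvd_mul hb ha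

theorem pow_dvd_sub_mul_sub_iff_pow_half_dvd (hp : Prime p) (hdvd : p ^ ((n + 1) / 2) ∣ a - b)
    (x : R) : p ^ n ∣ (x - a) * (x - b) ↔ p ^ ((n + 1) / 2) ∣ x - b := by
  have hab : p ^ ((n + 1) / 2) ∣ x - a ↔ p ^ ((n + 1) / 2) ∣ x - b := by
    rw [← sub_add_sub_cancel x a b, dvd_add_left hdvd]
  refine ⟨fun h ↦ ?_, fun hb ↦ ?_⟩
  · exact (pow_dvd_or_pow_dvd_of_pow_dvd_mul hp (by omega) h).elim hab.1 id
  · calc p ^ n ∣ p ^ ((n + 1) / 2) * p ^ ((n + 1) / 2) := by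
          rw [← pow_add]; exact pow_dvd_pow p (by omega)
      _ ∣ (x - a) * (x - b) := mul_dvd_mul (hab.2 hb) hb

end IntegralDomain

section Counting

open Finset

theorem card_fiber_mul_card_of_surjective {G H F : Type*} [AddGroup G] [Fintype G] [AddMonoid H]
    [Fintype H] [DecidableEq H] [FunLike F G H] [AddMonoidHomClass F G H] {f : F}
    (hf : Function.Surjective f) (y : H) :
    #{x : G | f x = y} * Fintype.card H = Fintype.card G := by
  symm
  calc Fintype.card G = ∑ z : H, #{x : G | f x = z} :=
        card_eq_sum_card_fiberwise fun _ _ ↦ mem_coe.2 (mem_univ _)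
    _ = ∑ _z : H, #{x : G | f x = y} :=
        sum_congr rfl fun z _ ↦ AddMonoidHom.card_fiber_eq_of_mem_range f (hf z) (hf y)
    _ = #{x : G | f x = y} * Fintype.card H := by
        rw [sum_const, card_univ, smul_eq_mul, mul_comm]

section Modulus

variable {d N : ℕ}

theorem card_filter_castHom_eq [NeZero N] (hd : d ∣ N) (c : ZMod d) :
    #{x : ZMod N | ZMod.castHom hd (ZMod d) x = c} = N / d := by
  have : NeZero d := ⟨ne_zero_of_dvd_ne_zero (NeZero.ne N) hd⟩
  have h := card_fiber_mul_card_of_surjective (ZMod.castHom_surjective hd) c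
  rw [ZMod.card, ZMod.card] at h
  exact Nat.eq_div_of_mul_eq_left (NeZero.ne d) h

theorem castHom_intCast_eq_intCast_iff (hd : d ∣ N) (x c : ℤ) :
    ZMod.castHom hd (ZMod d) x = c ↔ (d : ℤ) ∣ x - c := by
  rw [map_intCast, eq_comm, ZMod.intCast_eq_intCast_iff_dvd_sub]

theorem intCast_sub_mul_sub_eq_zero_iff (x a b : ℤ) :
    ((x : ZMod N) - a) * (x - b) = 0 ↔ (N : ℤ) ∣ (x - a) * (x - b) := by
  rw [← ZMod.intCast_zmod_eq_zero_iff_dvd, Int.cast_mul, Int.cast_sub, Int.cast_sub]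

end Modulus

section PrimePower

variable {p : ℕ} [Fact p.Prime] {l n : ℕ} {a b : ℤ}

theorem card_filter_sub_mul_sub_eq_zero_of_two_mul_lt (hdvd : (p : ℤ) ^ l ∣ a - b)
    (hndvd : ¬(p : ℤ) ^ (l + 1) ∣ a - b) (hln : 2 * l < n) :
    #{x : ZMod (p ^ n) | (x - a) * (x - b) = 0} = 2 * p ^ l := by
  have hmod : p ^ (n - l) ∣ p ^ n := pow_dvd_pow p (Nat.sub_le n l)
  let red := ZMod.castHom hmod (ZMod (p ^ (n - l)))
  have hroot (x : ZMod (p ^ n)) : (x - a) * (x - b) = 0 ↔ red x = a ∨ red x = b := by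
    obtain ⟨x, rfl⟩ := ZMod.intCast_surjective x
    simp only [red, castHom_intCast_eq_intCast_iff, intCast_sub_mul_sub_eq_zero_iff, Nat.cast_pow]
    exact pow_dvd_sub_mul_sub_iff_or (Nat.prime_iff_prime_int.1 Fact.out) hdvd hndvd hln.le x
  have hne : (b : ZMod (p ^ (n - l))) ≠ a := by
    rw [Ne, ZMod.intCast_eq_intCast_iff_dvd_sub, Nat.cast_pow]
    exact fun h ↦ hndvd ((pow_dvd_pow _ (by omega)).trans h)
  have hdisj : Disjoint (univ.filter (red · = a)) (univ.filter (red · = b)) :=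
    disjoint_filter.2 fun _ _ ha hb ↦ hne (hb.symm.trans ha)
  have hindex : p ^ n / p ^ (n - l) = p ^ l := by
    rw [Nat.pow_div (Nat.sub_le n l) (NeZero.pos p), Nat.sub_sub_self (by omega)]
  simp only [hroot, filter_or]
  rw [card_union_of_disjoint hdisj, card_filter_castHom_eq, card_filter_castHom_eq, hindex,
    two_mul]

theorem card_filter_sub_mul_sub_eq_zero_of_le_two_mul (hdvd : (p : ℤ) ^ l ∣ a - b)
    (hln : n ≤ 2 * l) :
    #{x : ZMod (p ^ n) | (x - a) * (x - b) = 0} = p ^ (n / 2) := by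
  have hmod : p ^ ((n + 1) / 2) ∣ p ^ n := pow_dvd_pow p (by omega)
  have hdvd' : (p : ℤ) ^ ((n + 1) / 2) ∣ a - b := (pow_dvd_pow _ (by omega)).trans hdvd
  have hroot (x : ZMod (p ^ n)) :
      (x - a) * (x - b) = 0 ↔ ZMod.castHom hmod (ZMod (p ^ ((n + 1) / 2))) x = b := by
    obtain ⟨x, rfl⟩ := ZMod.intCast_surjective x
    simp only [castHom_intCast_eq_intCast_iff, intCast_sub_mul_sub_eq_zero_iff, Nat.cast_pow]
    exact pow_dvd_sub_mul_sub_iff_pow_half_dvd (Nat.prime_iff_prime_int.1 Fact.out) hdvd' x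
  simp only [hroot]
  rw [card_filter_castHom_eq, Nat.pow_div (by omega) (NeZero.pos p),
    show n - (n + 1) / 2 = n / 2 by omega]

theorem hensel_quadratic_count_general {s q : ℤ} (hs : s ≡ a + b [ZMOD (p : ℤ) ^ n])
    (hq : q ≡ a * b [ZMOD (p : ℤ) ^ n]) (hdvd : (p : ℤ) ^ l ∣ a - b)
    (hndvd : ¬(p : ℤ) ^ (l + 1) ∣ a - b) :
    #{x : ZMod (p ^ n) | x ^ 2 - s * x + q = 0} =
      if 2 * l < n then 2 * p ^ l else p ^ (n / 2) := by
  have hfactor (x : ZMod (p ^ n)) : x ^ 2 - s * x + q = (x - a) * (x - b) := by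
    rw [← Nat.cast_pow, ← ZMod.intCast_eq_intCast_iff] at hs hq
    rw [hs, hq]
    push_cast
    ring
  simp only [hfactor]
  split_ifs with hln
  · exact card_filter_sub_mul_sub_eq_zero_of_two_mul_lt hdvd hndvd hln
  · exact card_filter_sub_mul_sub_eq_zero_of_le_two_mul hdvd (not_lt.1 hln)

end PrimePower

end Counting

theorem ite_two_mul_lt_eq_ite_even {α : Type*} {l n : ℕ} (hn : n ≠ 0) (u : α) (v : ℕ → α) :
    (if 2 * l < n then u else v (n / 2)) =
      if Even n then (if l ≤ n / 2 - 1 then u else v (n / 2))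
      else (if l ≤ (n - 1) / 2 then u else v ((n - 1) / 2)) := by
  obtain ⟨k, rfl | rfl⟩ := Nat.even_or_odd' n
  · rw [if_pos (even_two_mul k)]
    exact if_congr (by omega) rfl rfl
  · have hhalf : (2 * k + 1) / 2 = (2 * k + 1 - 1) / 2 := by omega
    rw [if_neg (Nat.not_even_two_mul_add_one k), hhalf]
    exact if_congr (by omega) rfl rfl

/-- Counting roots of `x² - sx + π ≡ 0 (mod p^n)` when
`s ≡ π + 1 (mod p^n)` and `p^ℓ` exactly divides `π - 1`. Here `q` plays the role of `π`. -/
theorem hensel_quadratic_count (p : ℕ) (hp : p.Prime) (hodd : Odd p) (n : ℕ) (hn : 1 ≤ n)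
    (s q : ℤ) (hs : s ≡ q + 1 [ZMOD ((p : ℤ) ^ n)])
    (l : ℕ) (hl1 : 1 ≤ l) (hln : l ≤ n)
    (hdvd : (p : ℤ) ^ l ∣ q - 1) (hndvd : ¬ (p : ℤ) ^ (l + 1) ∣ q - 1) :
    letI : NeZero p := ⟨hp.ne_zero⟩
    (Finset.univ.filter (fun x : ZMod (p ^ n) =>
        x ^ 2 - (s : ZMod (p ^ n)) * x + (q : ZMod (p ^ n)) = 0)).card =
      if Even n then (if l ≤ n / 2 - 1 then 2 * p ^ l else p ^ (n / 2))
      else (if l ≤ (n - 1) / 2 then 2 * p ^ l else p ^ ((n - 1) / 2)) := by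
  have : Fact p.Prime := ⟨hp⟩
  exact (hensel_quadratic_count_general hs (by rw [mul_one]) hdvd hndvd).trans
    (ite_two_mul_lt_eq_ite_even (Nat.one_le_iff_ne_zero.1 hn) _ (p ^ ·))

end
end

section
/- There is an absolute constant C > 0 such that the following holds. Let p be an odd prime, n ≥ 1 an integer, and let I be a nonempty subset of (ℤ/p^nℤ)^× consisting of the reductions modulo p^n of the integers coprime to p lying in some interval of length at most p^n. Then the number of quadruples (x₁, x₂, x₃, x₄) ∈ I⁴ satisfying x₁ + x₂ ≡ x₃ + x₄ (mod p^n) and x₁^{−1} + x₂^{−1} ≡ x₃^{−1} + x₄^{−1} (mod p^n) is at most C·n·|I|². -/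
open scoped BigOperators
open Filter MeasureTheory

noncomputable section

/-!
Multiplying `x₁⁻¹ + x₂⁻¹ = x₃⁻¹ + x₄⁻¹` by `x₁ x₂ x₃ x₄` and eliminating `x₄ = x₁ + x₂ - x₃` leaves
`(x₁ + x₂) (x₁ - x₃) (x₂ - x₃) = 0`. The first two factors minus the third add up to `2 x₁`, which
is prime to `p`, so some factor is prime to `p` and the power `p ^ n` is shared between the other
two, as `p ^ i` and `p ^ j` with `i + j = n`. These two factors have a variable in common, and
once it is fixed the other two variables lie in fixed residue classes modulo `p ^ i` and `p ^ j`.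
If the interval has length `L ≤ p ^ n`, that leaves at most `(L / p ^ i + 1) (L / p ^ j + 1) ≤ 4 L`
possibilities, and `L` is at most a constant times `|I|`.
-/

open Finset

section IntervalCounts

lemma card_filter_modEq_Ioc_le {a b m : ℤ} (hab : a ≤ b) (hm : 0 < m) (v : ℤ) :
    (#{x ∈ Ioc a b | x ≡ v [ZMOD m]} : ℤ) ≤ (b - a) / m + 1 := by
  lift m to ℕ using hm.le
  have hdiv : ⌊((b - v) / m - (a - v) / m : ℚ)⌋ = (b - a) / m := by
    rw [← Rat.floor_intCast_div_natCast]
    push_cast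
    ring_nf
  have hfloor := Int.le_floor_add_floor ((b - v) / m - (a - v) / m : ℚ) ((a - v) / m)
  rw [sub_add_cancel, hdiv] at hfloor
  have hnonneg : 0 ≤ (b - a) / (m : ℤ) := Int.ediv_nonneg (sub_nonneg.mpr hab) hm.le
  rw [Int.Ioc_filter_modEq_card a b hm v, Int.cast_natCast]
  omega

lemma sub_le_four_mul_card_filter_not_dvd_Ioc {a b m : ℤ} (hm : 2 ≤ m)
    (hne : {x ∈ Ioc a b | ¬ m ∣ x}.Nonempty) :
    b - a ≤ 4 * #{x ∈ Ioc a b | ¬ m ∣ x} := by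
  have hab : a ≤ b := by
    obtain ⟨x, hx⟩ := hne
    simp only [mem_filter, mem_Ioc] at hx
    omega
  have hdvd : (#{x ∈ Ioc a b | m ∣ x} : ℤ) ≤ (b - a) / m + 1 := by
    simpa only [Int.modEq_zero_iff_dvd] using card_filter_modEq_Ioc_le hab (by omega) 0
  have hhalf : 2 * ((b - a) / m) ≤ b - a :=
    (mul_le_mul_of_nonneg_right hm (Int.ediv_nonneg (by omega) (by omega))).trans
      (Int.mul_ediv_self_le (by omega))
  have hsplit := card_filter_add_card_filter_not (s := Ioc a b) (m ∣ ·)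
  rw [Int.card_Ioc] at hsplit
  have hpos := hne.card_pos
  omega

lemma floor_sub_floor_le {R : Type*} [Ring R] [LinearOrder R] [IsStrictOrderedRing R] [FloorRing R]
    {x y : R} {m : ℕ} (h : y - x ≤ m) : ⌊y⌋ - ⌊x⌋ ≤ m := by
  rw [sub_le_iff_le_add', ← Int.floor_add_natCast]
  exact Int.floor_mono (sub_le_iff_le_add'.mp h)

lemma injOn_intCast_Ioc {a b : ℤ} {m : ℕ} (h : b - a ≤ m) :
    Set.InjOn (fun x : ℤ => (x : ZMod m)) (Ioc a b) := by
  intro x hx y hy hxy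
  rw [mem_coe, mem_Ioc] at hx hy
  have hdvd := (ZMod.intCast_eq_intCast_iff_dvd_sub x y m).mp hxy
  have := Int.eq_zero_of_abs_lt_dvd hdvd (by rw [abs_lt]; omega)
  omega

lemma ediv_add_one_mul_ediv_add_one_le {l d e : ℤ} (hl : 0 < l) (hd : 0 < d) (he : 0 < e)
    (hde : l ≤ d * e) : (l / d + 1) * (l / e + 1) ≤ 4 * l := by
  have hld : l / d ≤ l := Int.ediv_le_self d hl.le
  have hle : l / e ≤ l := Int.ediv_le_self e hl.le
  have hprod : l / d * (l / e) ≤ l := by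
    refine le_of_mul_le_mul_left ?_ (mul_pos hd he)
    calc d * e * (l / d * (l / e)) = (d * (l / d)) * (e * (l / e)) := by ring
      _ ≤ l * l := mul_le_mul (Int.mul_ediv_self_le hd.ne') (Int.mul_ediv_self_le he.ne')
          (mul_nonneg he.le (Int.ediv_nonneg hl.le he.le)) hl.le
      _ ≤ d * e * l := by gcongr
  linarith

lemma card_le_card_mul_of_modEq {α β : Type*} {S : Finset α} {X : Finset β}
    {a b d e : ℤ} (hab : a < b) (hd : 0 < d) (he : 0 < e) (hde : b - a ≤ d * e)
    {f : α → β} {g h : α → ℤ} (φ ψ : β → ℤ) (hinj : Set.InjOn (fun t => (f t, g t, h t)) S)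
    (hmem : ∀ t ∈ S, f t ∈ X ∧ g t ∈ Ioc a b ∧ h t ∈ Ioc a b)
    (hmod : ∀ t ∈ S, g t ≡ φ (f t) [ZMOD d] ∧ h t ≡ ψ (f t) [ZMOD e]) :
    (#S : ℤ) ≤ #X * (4 * (b - a)) := by
  classical
  have hfiber (z : β) : (#{t ∈ S | f t = z} : ℤ) ≤ 4 * (b - a) := by
    set U := {x ∈ Ioc a b | x ≡ φ z [ZMOD d]}
    set V := {y ∈ Ioc a b | y ≡ ψ z [ZMOD e]}
    have hle : #{t ∈ S | f t = z} ≤ #(U ×ˢ V) := by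
      refine card_le_card_of_injOn (fun t => (g t, h t)) (fun t ht => ?_) fun s hs t ht hst => ?_
      · obtain ⟨htS, rfl⟩ := mem_filter.mp ht
        obtain ⟨-, hg, hh⟩ := hmem t htS
        obtain ⟨hgf, hhf⟩ := hmod t htS
        exact mem_product.mpr ⟨mem_filter.mpr ⟨hg, hgf⟩, mem_filter.mpr ⟨hh, hhf⟩⟩
      · obtain ⟨hsS, hsz⟩ := mem_filter.mp hs
        obtain ⟨htS, htz⟩ := mem_filter.mp ht
        exact hinj hsS htS (Prod.ext (hsz.trans htz.symm) hst)
    calc (#{t ∈ S | f t = z} : ℤ) ≤ #U * #V := by exact_mod_cast hle.trans_eq (card_product U V)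
      _ ≤ ((b - a) / d + 1) * ((b - a) / e + 1) := by
          have hU : (#U : ℤ) ≤ _ := card_filter_modEq_Ioc_le hab.le hd (φ z)
          have hV : (#V : ℤ) ≤ _ := card_filter_modEq_Ioc_le hab.le he (ψ z)
          exact mul_le_mul hU hV (Nat.cast_nonneg _) ((Nat.cast_nonneg _).trans hU)
      _ ≤ 4 * (b - a) := ediv_add_one_mul_ediv_add_one_le (sub_pos.mpr hab) hd he hde
  calc (#S : ℤ) = ∑ z ∈ X, (#{t ∈ S | f t = z} : ℤ) := by
        exact_mod_cast card_eq_sum_card_fiberwise fun t ht => (hmem t ht).1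
    _ ≤ #X • (4 * (b - a)) := sum_le_card_nsmul _ _ _ fun z _ => hfiber z
    _ = #X * (4 * (b - a)) := nsmul_eq_mul _ _

end IntervalCounts

section PrimePowers

lemma exists_antidiagonal_pow_dvd_of_pow_dvd_mul {R : Type*} [CommMonoidWithZero R]
    [IsCancelMulZero R] {p u v : R} (hp : Prime p) {n : ℕ} (h : p ^ n ∣ u * v) :
    ∃ ij ∈ antidiagonal n, p ^ ij.1 ∣ u ∧ p ^ ij.2 ∣ v := by
  obtain ⟨k, hk⟩ := h
  obtain ⟨i, j, b, c, hij, -, rfl, rfl⟩ := mul_eq_mul_prime_pow hp (hk.trans (mul_comm _ k))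
  exact ⟨(i, j), mem_antidiagonal.mpr hij, dvd_mul_left _ _, dvd_mul_left _ _⟩

lemma exists_antidiagonal_pow_dvd_of_pow_dvd_mul_mul {R : Type*} [CommMonoidWithZero R]
    [IsCancelMulZero R] {p u v w : R} (hp : Prime p) (hnot : ¬ (p ∣ u ∧ p ∣ v ∧ p ∣ w)) {n : ℕ}
    (h : p ^ n ∣ u * v * w) :
    ∃ ij ∈ antidiagonal n, (p ^ ij.1 ∣ u ∧ p ^ ij.2 ∣ v) ∨ (p ^ ij.1 ∣ u ∧ p ^ ij.2 ∣ w) ∨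
      (p ^ ij.1 ∣ v ∧ p ^ ij.2 ∣ w) := by
  have split {s t r : R} (hr : ¬ p ∣ r) (hstr : p ^ n ∣ r * (s * t)) :
      ∃ ij ∈ antidiagonal n, p ^ ij.1 ∣ s ∧ p ^ ij.2 ∣ t :=
    exists_antidiagonal_pow_dvd_of_pow_dvd_mul hp (hp.pow_dvd_of_dvd_mul_left n hr hstr)
  by_cases hu : p ∣ u
  · by_cases hv : p ∣ v
    · obtain ⟨ij, hij, hdvd⟩ := split (fun hw => hnot ⟨hu, hv, hw⟩) (mul_comm w (u * v) ▸ h)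
      exact ⟨ij, hij, .inl hdvd⟩
    · obtain ⟨ij, hij, hdvd⟩ := split hv (mul_left_comm v u w ▸ mul_assoc u v w ▸ h)
      exact ⟨ij, hij, .inr (.inl hdvd)⟩
  · obtain ⟨ij, hij, hdvd⟩ := split hu (mul_assoc u v w ▸ h)
    exact ⟨ij, hij, .inr (.inr hdvd)⟩

lemma exists_antidiagonal_modEq_of_pow_dvd {p x y z : ℤ} (hp : Prime p) (hx : ¬ p ∣ 2 * x) {n : ℕ}
    (h : p ^ n ∣ (x + y) * (x - z) * (y - z)) :
    ∃ ij ∈ antidiagonal n, (y ≡ -x [ZMOD p ^ ij.1] ∧ z ≡ x [ZMOD p ^ ij.2]) ∨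
      (x ≡ -y [ZMOD p ^ ij.1] ∧ z ≡ y [ZMOD p ^ ij.2]) ∨
      (x ≡ z [ZMOD p ^ ij.1] ∧ y ≡ z [ZMOD p ^ ij.2]) := by
  have hnot : ¬ (p ∣ x + y ∧ p ∣ x - z ∧ p ∣ y - z) := fun ⟨hxy, hxz, hyz⟩ =>
    hx ((by ring : x + y + (x - z) - (y - z) = 2 * x) ▸ dvd_sub (dvd_add hxy hxz) hyz)
  obtain ⟨ij, hij, hdvd⟩ := exists_antidiagonal_pow_dvd_of_pow_dvd_mul_mul hp hnot h
  have modEq_neg {d u v : ℤ} (h : d ∣ u + v) : u ≡ -v [ZMOD d] :=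
    (Int.modEq_iff_dvd.mpr (by rwa [sub_neg_eq_add])).symm
  have modEq {d u v : ℤ} (h : d ∣ u - v) : u ≡ v [ZMOD d] := (Int.modEq_iff_dvd.mpr h).symm
  exact ⟨ij, hij, hdvd.imp (fun ⟨hxy, hxz⟩ => ⟨modEq_neg (add_comm x y ▸ hxy), (modEq hxz).symm⟩)
    (.imp (fun ⟨hxy, hyz⟩ => ⟨modEq_neg hxy, (modEq hyz).symm⟩)
      fun ⟨hxz, hyz⟩ => ⟨modEq hxz, modEq hyz⟩)⟩

end PrimePowers

section Triples

/-- The triples `(x, y, z)` of elements of `J` with `m ∣ (x + y) (x - z) (y - z)`: for `J` prime to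
`m`, these are the integers behind the first three entries of the quadruples modulo `m`. -/
def dvdTriples (J : Finset ℤ) (m : ℤ) : Finset (ℤ × ℤ × ℤ) :=
  {t ∈ J ×ˢ J ×ˢ J | m ∣ (t.1 + t.2.1) * (t.1 - t.2.2) * (t.2.1 - t.2.2)}

/-- The triples `(x, y, z)` of elements of `J` in which one of `x`, `y`, `z` determines, up to sign,
the residues of the other two modulo `d` and modulo `e`. -/
def pivotTriples (J : Finset ℤ) (d e : ℤ) : Finset (ℤ × ℤ × ℤ) :=
  {t ∈ J ×ˢ J ×ˢ J | (t.2.1 ≡ -t.1 [ZMOD d] ∧ t.2.2 ≡ t.1 [ZMOD e]) ∨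
    (t.1 ≡ -t.2.1 [ZMOD d] ∧ t.2.2 ≡ t.2.1 [ZMOD e]) ∨
    (t.1 ≡ t.2.2 [ZMOD d] ∧ t.2.1 ≡ t.2.2 [ZMOD e])}

lemma card_pivotTriples_le {J : Finset ℤ} {a b d e : ℤ} (hJ : J ⊆ Ioc a b) (hab : a < b)
    (hd : 0 < d) (he : 0 < e) (hde : b - a ≤ d * e) :
    (#(pivotTriples J d e) : ℤ) ≤ 12 * #J * (b - a) := by
  have mem_coords {P : ℤ × ℤ × ℤ → Prop} [DecidablePred P] {t : ℤ × ℤ × ℤ}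
      (ht : t ∈ {t ∈ J ×ˢ J ×ˢ J | P t}) : t.1 ∈ J ∧ t.2.1 ∈ J ∧ t.2.2 ∈ J := by
    simpa only [mem_product] using mem_of_mem_filter t ht
  set X := {t ∈ J ×ˢ J ×ˢ J | t.2.1 ≡ -t.1 [ZMOD d] ∧ t.2.2 ≡ t.1 [ZMOD e]}
  set Y := {t ∈ J ×ˢ J ×ˢ J | t.1 ≡ -t.2.1 [ZMOD d] ∧ t.2.2 ≡ t.2.1 [ZMOD e]}
  set Z := {t ∈ J ×ˢ J ×ˢ J | t.1 ≡ t.2.2 [ZMOD d] ∧ t.2.1 ≡ t.2.2 [ZMOD e]}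
  have hX : (#X : ℤ) ≤ #J * (4 * (b - a)) :=
    card_le_card_mul_of_modEq hab hd he hde (f := fun t => t.1) (g := fun t => t.2.1)
      (h := fun t => t.2.2) (fun x => -x) id (fun s _ t _ hst => by simp_all [Prod.ext_iff])
      (fun t ht => let ⟨hx, hy, hz⟩ := mem_coords ht; ⟨hx, hJ hy, hJ hz⟩)
      fun t ht => (mem_filter.mp ht).2
  have hY : (#Y : ℤ) ≤ #J * (4 * (b - a)) :=
    card_le_card_mul_of_modEq hab hd he hde (f := fun t => t.2.1) (g := fun t => t.1)
      (h := fun t => t.2.2) (fun y => -y) id (fun s _ t _ hst => by simp_all [Prod.ext_iff])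
      (fun t ht => let ⟨hx, hy, hz⟩ := mem_coords ht; ⟨hy, hJ hx, hJ hz⟩)
      fun t ht => (mem_filter.mp ht).2
  have hZ : (#Z : ℤ) ≤ #J * (4 * (b - a)) :=
    card_le_card_mul_of_modEq hab hd he hde (f := fun t => t.2.2) (g := fun t => t.1)
      (h := fun t => t.2.1) id id (fun s _ t _ hst => by simp_all [Prod.ext_iff])
      (fun t ht => let ⟨hx, hy, hz⟩ := mem_coords ht; ⟨hz, hJ hx, hJ hy⟩)
      fun t ht => (mem_filter.mp ht).2
  have hunion : #(pivotTriples J d e) ≤ #X + (#Y + #Z) := by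
    rw [pivotTriples, filter_or, filter_or]
    exact (card_union_le _ _).trans (Nat.add_le_add_left (card_union_le _ _) _)
  zify at hunion
  linarith

lemma dvdTriples_pow_subset_biUnion {p : ℤ} (hp : Prime p) {J : Finset ℤ}
    (hJp : ∀ x ∈ J, ¬ p ∣ 2 * x) (n : ℕ) :
    dvdTriples J (p ^ n) ⊆
      (antidiagonal n).biUnion fun ij => pivotTriples J (p ^ ij.1) (p ^ ij.2) := by
  intro t ht
  obtain ⟨htJ, hdvd⟩ := mem_filter.mp ht
  obtain ⟨ij, hij, hmod⟩ :=
    exists_antidiagonal_modEq_of_pow_dvd hp (hJp _ (mem_product.mp htJ).1) hdvd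
  exact mem_biUnion.mpr ⟨ij, hij, mem_filter.mpr ⟨htJ, hmod⟩⟩

lemma card_dvdTriples_pow_le {p : ℤ} (hp : Prime p) (hpos : 0 < p) {a b : ℤ} (hab : a < b)
    {n : ℕ} (hlen : b - a ≤ p ^ n) {J : Finset ℤ} (hJ : J ⊆ Ioc a b)
    (hJp : ∀ x ∈ J, ¬ p ∣ 2 * x) :
    (#(dvdTriples J (p ^ n)) : ℤ) ≤ (n + 1) * (12 * #J * (b - a)) := by
  have hpivot : ∀ ij ∈ antidiagonal n,
      (#(pivotTriples J (p ^ ij.1) (p ^ ij.2)) : ℤ) ≤ 12 * #J * (b - a) := fun ij hij =>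
    card_pivotTriples_le hJ hab (pow_pos hpos _) (pow_pos hpos _)
      (by rwa [← pow_add, mem_antidiagonal.mp hij])
  calc (#(dvdTriples J (p ^ n)) : ℤ)
      ≤ ∑ ij ∈ antidiagonal n, (#(pivotTriples J (p ^ ij.1) (p ^ ij.2)) : ℤ) := by
        exact_mod_cast (card_le_card (dvdTriples_pow_subset_biUnion hp hJp n)).trans card_biUnion_le
    _ ≤ #(antidiagonal n) • (12 * #J * (b - a)) := sum_le_card_nsmul _ _ _ hpivot
    _ = (n + 1) * (12 * #J * (b - a)) := by rw [Nat.card_antidiagonal, nsmul_eq_mul]; push_cast; rfl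

end Triples

section Quadruples

lemma add_mul_sub_mul_sub_eq_zero {R : Type*} [CommRing R] {x₁ x₂ x₃ x₄ y₁ y₂ y₃ y₄ : R}
    (h₁ : x₁ * y₁ = 1) (h₂ : x₂ * y₂ = 1) (h₃ : x₃ * y₃ = 1) (h₄ : x₄ * y₄ = 1)
    (hx : x₁ + x₂ = x₃ + x₄) (hy : y₁ + y₂ = y₃ + y₄) :
    (x₁ + x₂) * (x₁ - x₃) * (x₂ - x₃) = 0 := by
  have hclear : (x₁ + x₂) * x₃ * x₄ = (x₃ + x₄) * x₁ * x₂ := by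
    linear_combination x₁ * x₂ * x₃ * x₄ * hy - x₂ * x₃ * x₄ * h₁ - x₁ * x₃ * x₄ * h₂ +
      x₁ * x₂ * x₄ * h₃ + x₁ * x₂ * x₃ * h₄
  obtain rfl : x₄ = x₁ + x₂ - x₃ := by linear_combination -hx
  linear_combination -hclear

/-- The quadruples `((x₁, x₂), (x₃, x₄))` of elements of `I` with `x₁ + x₂ = x₃ + x₄` and
`x₁⁻¹ + x₂⁻¹ = x₃⁻¹ + x₄⁻¹`, nested as in `quadruple_counting`. -/
def addInvQuadruples {m : ℕ} (I : Finset (ZMod m)) :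
    Finset ((ZMod m × ZMod m) × ZMod m × ZMod m) :=
  {q ∈ (I ×ˢ I) ×ˢ (I ×ˢ I) |
    q.1.1 + q.1.2 = q.2.1 + q.2.2 ∧ q.1.1⁻¹ + q.1.2⁻¹ = q.2.1⁻¹ + q.2.2⁻¹}

lemma card_addInvQuadruples_image_le {m : ℕ} {J : Finset ℤ} (hJ : ∀ x ∈ J, IsCoprime x m) :
    #(addInvQuadruples (J.image fun x : ℤ => (x : ZMod m))) ≤ #(dvdTriples J m) := by
  refine card_le_card_of_surjOn
    (fun t : ℤ × ℤ × ℤ => (((t.1 : ZMod m), (t.2.1 : ZMod m)),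
      ((t.2.2 : ZMod m), (t.1 + t.2.1 - t.2.2 : ZMod m)))) ?_
  rintro ⟨⟨x₁, x₂⟩, x₃, x₄⟩ hq
  simp only [addInvQuadruples, coe_filter, Set.mem_ofPred_eq, mem_product, mem_image] at hq
  obtain ⟨⟨⟨⟨x, hx, rfl⟩, ⟨y, hy, rfl⟩⟩, ⟨z, hz, rfl⟩, ⟨w, hw, rfl⟩⟩, hsum, hinv⟩ := hq
  have hzero := add_mul_sub_mul_sub_eq_zero (ZMod.coe_int_mul_inv_eq_one (hJ x hx))
    (ZMod.coe_int_mul_inv_eq_one (hJ y hy)) (ZMod.coe_int_mul_inv_eq_one (hJ z hz))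
    (ZMod.coe_int_mul_inv_eq_one (hJ w hw)) hsum hinv
  have hdvd : (m : ℤ) ∣ (x + y) * (x - z) * (y - z) := by
    rw [← ZMod.intCast_zmod_eq_zero_iff_dvd]
    exact_mod_cast hzero
  refine ⟨(x, y, z), mem_filter.mpr ⟨by simp [hx, hy, hz], hdvd⟩, ?_⟩
  simp only [hsum, add_sub_cancel_left]

lemma card_addInvQuadruples_Ioc_le {p n : ℕ} (hp : p.Prime) (hodd : Odd p) {a b : ℤ}
    (hlen : b - a ≤ (p : ℤ) ^ n) {J : Finset ℤ} (hJ : J = {x ∈ Ioc a b | ¬ (p : ℤ) ∣ x})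
    (hne : J.Nonempty) :
    (#(addInvQuadruples (J.image fun x : ℤ => (x : ZMod (p ^ n)))) : ℤ) ≤
      48 * (n + 1) * #J ^ 2 := by
  have hpZ : Prime (p : ℤ) := Nat.prime_iff_prime_int.mp hp
  have hpJ : ∀ x ∈ J, ¬ (p : ℤ) ∣ x := fun x hx => by
    rw [hJ] at hx
    exact (mem_filter.mp hx).2
  have hJsub : J ⊆ Ioc a b := hJ ▸ filter_subset _ _
  have hab : a < b := nonempty_Ioc.mp (hne.mono hJsub)
  have hcoprime : ∀ x ∈ J, IsCoprime x ((p ^ n : ℕ) : ℤ) := fun x hx => by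
    exact_mod_cast ((hpZ.coprime_iff_not_dvd.mpr (hpJ x hx)).pow_left (m := n)).symm
  have hp2 : ¬ p ∣ 2 := fun h2 => by
    obtain rfl := (Nat.prime_dvd_prime_iff_eq hp Nat.prime_two).mp h2
    exact absurd hodd (by decide)
  have hlength : b - a ≤ 4 * #J :=
    hJ ▸ sub_le_four_mul_card_filter_not_dvd_Ioc (by exact_mod_cast hp.two_le) (hJ ▸ hne)
  calc (#(addInvQuadruples (J.image fun x : ℤ => (x : ZMod (p ^ n)))) : ℤ)
      ≤ #(dvdTriples J (p ^ n)) := by exact_mod_cast card_addInvQuadruples_image_le hcoprime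
    _ ≤ (n + 1) * (12 * #J * (b - a)) :=
        card_dvdTriples_pow_le hpZ (by exact_mod_cast hp.pos) hab hlen hJsub
          fun x hx h => (hpZ.dvd_or_dvd h).elim (by exact_mod_cast hp2) (hpJ x hx)
    _ ≤ (n + 1) * (12 * #J * (4 * #J)) := by gcongr
    _ = 48 * (n + 1) * #J ^ 2 := by ring

end Quadruples

/-- The counting ingredient: for an interval `I` in `(ℤ/p^nℤ)ˣ`
(the reductions of the integers coprime to `p` in a real interval `(A,B]` of length
at most `p^n`), the number of quadruples `(x₁,x₂,x₃,x₄) ∈ I⁴` with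
`x₁+x₂ ≡ x₃+x₄` and `x₁⁻¹+x₂⁻¹ ≡ x₃⁻¹+x₄⁻¹ (mod p^n)` is `≤ C n |I|²`. -/
theorem quadruple_counting :
    ∃ C : ℝ, 0 < C ∧
      ∀ (p : ℕ) (hp : p.Prime), Odd p → ∀ n : ℕ, 1 ≤ n →
        ∀ A B : ℝ, B - A ≤ (p : ℝ) ^ n →
          ∀ I : Finset (ZMod (p ^ n)),
            I = ((Finset.Icc (⌊A⌋ + 1) ⌊B⌋).filter (fun x : ℤ => ¬ (p : ℤ) ∣ x)).image
                  (fun x : ℤ => (x : ZMod (p ^ n))) →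
            I.Nonempty →
            ((((I ×ˢ I) ×ˢ (I ×ˢ I)).filter
                (fun q : (ZMod (p ^ n) × ZMod (p ^ n)) × ZMod (p ^ n) × ZMod (p ^ n) =>
                  q.1.1 + q.1.2 = q.2.1 + q.2.2 ∧
                    q.1.1⁻¹ + q.1.2⁻¹ = q.2.1⁻¹ + q.2.2⁻¹)).card : ℝ)
              ≤ C * n * (I.card : ℝ) ^ 2 := by
  refine ⟨96, by norm_num, fun p hp hodd n hn A B hAB I hI hIne => ?_⟩
  rw [Icc_add_one_left_eq_Ioc] at hI
  set J := {x ∈ Ioc ⌊A⌋ ⌊B⌋ | ¬ (p : ℤ) ∣ x} with hJ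
  have hlen : ⌊B⌋ - ⌊A⌋ ≤ ((p ^ n : ℕ) : ℤ) := floor_sub_floor_le (by exact_mod_cast hAB)
  have hcard : #I = #J :=
    hI ▸ card_image_of_injOn ((injOn_intCast_Ioc hlen).mono (coe_subset.mpr (filter_subset _ _)))
  have hJne : J.Nonempty := image_nonempty.mp (hI ▸ hIne)
  have hcount : (#(addInvQuadruples I) : ℝ) ≤ 48 * (n + 1) * #J ^ 2 := by
    rw [hI]
    exact_mod_cast card_addInvQuadruples_Ioc_le hp hodd (by exact_mod_cast hlen) hJ hJne
  calc (#(addInvQuadruples I) : ℝ) ≤ 48 * (n + 1) * #J ^ 2 := hcount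
    _ ≤ 48 * (n + n) * #J ^ 2 := by gcongr; exact_mod_cast hn
    _ = 96 * n * #I ^ 2 := by rw [hcard]; ring

end
end
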